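/- arXiv:2209.06142 — 4 statements merged into one kernel-verified Lean document; each statement's English description precedes it below -/
import Mathlib

section
/- For every permutation σ of [n], the number of linear extensions of the permutation poset P_σ times the number of linear extensions of P_{σ̄} is at least n!, where σ̄(i) = σ(n+1−i). -/
namespace SidorenkoAux

open Classical in
/-- Backward slide (insertion) of `x` into the word `l`: a head letter and a remaining word. -/
noncomputable def go {α : Type*} (r : α → α → Prop) (x : α) : List α → α × List α
  | [] => (x, [])
  | w :: l => if r w (go r x l).1 then (w, (go r x l).1 :: (go r x l).2)
      else ((go r x l).1, w :: (go r x l).2)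

open Classical in
/-- The promotion path of the word `c :: l`. -/
noncomputable def path {α : Type*} (r : α → α → Prop) : α → List α → List α
  | c, [] => [c]
  | c, z :: l => if r c z then c :: path r z l else path r c l

/-- The word respects `r`. -/
def Good {α : Type*} (r : α → α → Prop) (l : List α) : Prop := l.Pairwise (fun a b => ¬ r b a)

variable {α : Type*} {r : α → α → Prop}

theorem go_perm (x : α) (l : List α) : ((go r x l).1 :: (go r x l).2).Perm (x :: l) := by
  induction l with
  | nil => simp [go]
  | cons w l ih =>
    have h : (w :: (go r x l).1 :: (go r x l).2).Perm (x :: w :: l) :=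
      (ih.cons w).trans (List.Perm.swap _ _ _)
    simp only [go]
    split_ifs
    · exact h
    · exact (List.Perm.swap _ _ _).trans h

theorem go_fst (ht : ∀ a b c, r a b → r b c → r a c) (x : α) (l : List α) :
    (go r x l).1 = x ∨ ((go r x l).1 ∈ l ∧ r (go r x l).1 x) := by
  induction l with
  | nil => simp [go]
  | cons w l ih =>
    simp only [go]
    split_ifs with h
    · right
      rcases ih with e | ⟨_, e⟩
      · rw [e] at h; exact ⟨by simp, h⟩
      · exact ⟨by simp, ht _ _ _ h e⟩
    · rcases ih with e | ⟨m, e⟩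
      · left; exact e
      · right; exact ⟨List.mem_cons_of_mem _ m, e⟩

theorem go_good (hi : ∀ a, ¬ r a a) (ht : ∀ a b c, r a b → r b c → r a c) (x : α) (l : List α)
    (hl : Good r l) : Good r ((go r x l).1 :: (go r x l).2) := by
  induction l with
  | nil => simp [go, Good]
  | cons w l ih =>
    obtain ⟨h1, h2⟩ := List.pairwise_cons.1 hl
    have ih := ih h2
    obtain ⟨i1, i2⟩ := List.pairwise_cons.1 ih
    have hp := go_perm (r := r) x l
    have hf := go_fst ht x l
    simp only [go]
    split_ifs with h
    · refine List.pairwise_cons.2 ⟨?_, ih⟩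
      intro b hb hbw
      rcases List.mem_cons.1 (hp.mem_iff.1 hb) with e | e
      · have := ht _ _ _ hbw h
        rcases List.mem_cons.1 hb with e' | e'
        · rw [← e'] at this; exact hi _ this
        · exact i1 b e' this
      · exact h1 b e hbw
    · refine List.pairwise_cons.2 ⟨?_, List.pairwise_cons.2 ⟨?_, i2⟩⟩
      · intro b hb
        rcases List.mem_cons.1 hb with e | e
        · rw [e]; exact h
        · exact i1 b e
      · intro b hb hbw
        rcases List.mem_cons.1 (hp.mem_iff.1 (List.mem_cons_of_mem _ hb)) with e | e
        · rcases hf with e' | ⟨m, e'⟩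
          · skip
            by_cases hx : x ∈ l
            · rw [e] at hbw; exact h1 x hx hbw
            · rw [e'] at hp
              have := (List.perm_cons x).1 hp
              rw [e] at hb
              exact hx (this.mem_iff.1 hb)
          · rw [e] at hbw
            exact h1 _ m (ht _ _ _ e' hbw)
        · exact h1 b e hbw

theorem head_mem_path_or (ht : ∀ a b c, r a b → r b c → r a c) (c : α) (l : List α) :
    c ∈ path r c l ∧ (∀ a ∈ path r c l, a = c ∨ r c a) ∧
      ∀ a ∈ path r c l, ∀ b ∈ path r c l, a = b ∨ r a b ∨ r b a := by
  induction l generalizing c with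
  | nil => simp [path]
  | cons z l ih =>
    simp only [path]
    split_ifs with h
    · obtain ⟨_, h2, h3⟩ := ih z
      have key : ∀ a ∈ path r z l, r c a := by
        intro a ha
        rcases h2 a ha with e | e
        · rw [e]; exact h
        · exact ht _ _ _ h e
      refine ⟨by simp, ?_, ?_⟩
      · intro a ha
        rcases List.mem_cons.1 ha with e | e
        · exact Or.inl e
        · exact Or.inr (key a e)
      · intro a ha b hb
        rcases List.mem_cons.1 ha with e | e <;> rcases List.mem_cons.1 hb with e' | e'
        · left; rw [e, e']
        · right; left; rw [e]; exact key b e'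
        · right; right; rw [e']; exact key a e
        · exact h3 a e b e'
    · exact ih c

theorem mem_path_go (ht : ∀ a b c, r a b → r b c → r a c) (x : α) (l : List α)
    (hl : Good r l) : x ∈ path r (go r x l).1 (go r x l).2 := by
  induction l with
  | nil => simp [go, path]
  | cons w l ih =>
    obtain ⟨h1, h2⟩ := List.pairwise_cons.1 hl
    have ih := ih h2
    have hf := go_fst ht x l
    simp only [go]
    split_ifs with h
    · simp only [path, if_pos h]
      exact List.mem_cons_of_mem _ ih
    · simp only [path]
      split_ifs with h'
      · rcases hf with e | ⟨m, e⟩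
        · rw [e]; simp
        · exact absurd h' (h1 _ m)
      · exact ih

theorem go_inj (ht : ∀ a b c, r a b → r b c → r a c) (x : α) (l l' : List α)
    (hl : Good r l) (hl' : Good r l') (hx : x ∉ l) (hx' : x ∉ l')
    (h : go r x l = go r x l') : l = l' := by
  induction l generalizing l' with
  | nil =>
    have h1 := (go_perm (r := r) x ([] : List α)).length_eq
    have h2 := (go_perm (r := r) x l').length_eq
    rw [h] at h1
    rw [h1] at h2
    simp at h2
    exact h2.symm
  | cons w t ih =>
    cases l' with
    | nil =>
      have h1 := (go_perm (r := r) x ([] : List α)).length_eq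
      have h2 := (go_perm (r := r) x (w :: t)).length_eq
      rw [← h] at h1
      rw [h1] at h2
      simp at h2
    | cons w' t' =>
      obtain ⟨a1, a2⟩ := List.pairwise_cons.1 hl
      obtain ⟨b1, b2⟩ := List.pairwise_cons.1 hl'
      have f := go_fst ht x t
      have f' := go_fst ht x t'
      have ih := ih t' a2 b2 (fun m => hx (List.mem_cons_of_mem _ m))
        (fun m => hx' (List.mem_cons_of_mem _ m))
      simp only [go] at h
      split_ifs at h with c1 c2 c2
      · simp only [Prod.mk.injEq, List.cons.injEq] at h
        rw [h.1, ih (Prod.ext h.2.1 h.2.2)]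
      · simp only [Prod.mk.injEq, List.cons.injEq] at h
        exfalso
        rcases f' with e | ⟨m, _⟩
        · exact hx (by rw [h.1, e]; simp)
        · apply b1 _ m
          rw [← h.1, ← h.2.1]; exact c1
      · simp only [Prod.mk.injEq, List.cons.injEq] at h
        exfalso
        rcases f with e | ⟨m, _⟩
        · exact hx' (by rw [← h.1, e]; simp)
        · apply a1 _ m
          rw [h.1, h.2.1]; exact c2
      · simp only [Prod.mk.injEq, List.cons.injEq] at h
        rw [h.2.1, ih (Prod.ext h.1 h.2.2)]

open Classical in
/-- The linear extensions of `r` on `s`, as words. -/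
noncomputable def E (r : α → α → Prop) (s : Finset α) : Finset (List α) :=
  s.val.lists.toFinset.filter (fun l => Good r l)

theorem mem_E {s : Finset α} {l : List α} : l ∈ E r s ↔ s.val = (l : Multiset α) ∧ Good r l := by
  simp [E, Multiset.mem_lists_iff]

open Classical in
theorem main (q : α → α → Prop)
    (hi : ∀ a, ¬ r a a) (ht : ∀ a b c, r a b → r b c → r a c)
    (hi' : ∀ a, ¬ q a a) (ht' : ∀ a b c, q a b → q b c → q a c)
    (hrq : ∀ a b, (r a b ∨ r b a) → (q a b ∨ q b a) → False)
    (n : ℕ) (s : Finset α) (hs : s.card = n) :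
    n.factorial ≤ (E r s).card * (E q s).card := by
  induction n generalizing s with
  | zero =>
    rw [Finset.card_eq_zero] at hs
    subst hs
    have h1 : ∀ r : α → α → Prop, 0 < (E r ∅).card := fun r =>
      Finset.card_pos.2 ⟨[], mem_E.2 ⟨rfl, List.Pairwise.nil⟩⟩
    exact Nat.mul_pos (h1 r) (h1 q)
  | succ n ih =>
    have hsum : (n + 1).factorial ≤
        ∑ x ∈ s, (E r (s.erase x)).card * (E q (s.erase x)).card := by
      calc (n + 1).factorial = ∑ x ∈ s, n.factorial := by
            simp [hs, Nat.factorial_succ]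
        _ ≤ _ := Finset.sum_le_sum fun x hx => ih _ (by
            rw [Finset.card_erase_of_mem hx, hs]; rfl)
    refine hsum.trans ?_
    have hmem : ∀ (r : α → α → Prop), (∀ a, ¬ r a a) → (∀ a b c, r a b → r b c → r a c) →
        ∀ x ∈ s, ∀ l ∈ E r (s.erase x), (go r x l).1 :: (go r x l).2 ∈ E r s := by
      intro r hi ht x hx l hl
      obtain ⟨h1, h2⟩ := mem_E.1 hl
      refine mem_E.2 ⟨?_, go_good hi ht x l h2⟩
      rw [Multiset.coe_eq_coe.2 (go_perm x l), ← Multiset.cons_coe, ← h1, Finset.erase_val,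
        Multiset.cons_erase hx]
    have hnot : ∀ (r : α → α → Prop), ∀ x, ∀ l ∈ E r (s.erase x), x ∉ l := by
      intro r x l hl hx
      have h1 := (mem_E.1 hl).1
      have : x ∈ (s.erase x).val := by rw [h1]; exact hx
      exact Finset.notMem_erase x s this
    calc ∑ x ∈ s, (E r (s.erase x)).card * (E q (s.erase x)).card
        = (s.sigma fun x => E r (s.erase x) ×ˢ E q (s.erase x)).card := by
          rw [Finset.card_sigma]; simp [Finset.card_product]
      _ ≤ (E r s ×ˢ E q s).card := by
          refine Finset.card_le_card_of_injOn
            (fun p => ((go r p.1 p.2.1).1 :: (go r p.1 p.2.1).2,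
              (go q p.1 p.2.2).1 :: (go q p.1 p.2.2).2)) ?_ ?_
          · rintro ⟨x, l, m⟩ h
            simp only [Finset.mem_coe, Finset.mem_sigma, Finset.mem_product] at h ⊢
            exact ⟨hmem r hi ht x h.1 l h.2.1, hmem q hi' ht' x h.1 m h.2.2⟩
          · rintro ⟨x, l, m⟩ h ⟨y, l', m'⟩ h' e
            simp only [Finset.mem_coe, Finset.mem_sigma, Finset.mem_product] at h h'
            simp only [Prod.mk.injEq, List.cons.injEq] at e
            obtain ⟨⟨e1, e2⟩, e3, e4⟩ := e
            have g1 := (mem_E.1 h.2.1).2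
            have g2 := (mem_E.1 h.2.2).2
            have g1' := (mem_E.1 h'.2.1).2
            have g2' := (mem_E.1 h'.2.2).2
            have p1 := mem_path_go ht x l g1
            have p2 := mem_path_go ht' x m g2
            have p1' := mem_path_go ht y l' g1'
            have p2' := mem_path_go ht' y m' g2'
            rw [← e1, ← e2] at p1'
            rw [← e3, ← e4] at p2'
            have c1 := (head_mem_path_or ht _ _).2.2 x p1 y p1'
            have c2 := (head_mem_path_or ht' _ _).2.2 x p2 y p2'
            have hxy : x = y := by
              rcases c1 with c1 | c1
              · exact c1
              · rcases c2 with c2 | c2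
                · exact c2
                · exact (hrq x y c1 c2).elim
            subst hxy
            have i1 := go_inj ht x l l' g1 g1' (hnot r x l h.2.1) (hnot r x l' h'.2.1)
              (Prod.ext e1 e2)
            have i2 := go_inj ht' x m m' g2 g2' (hnot q x m h.2.2) (hnot q x m' h'.2.2)
              (Prod.ext e3 e4)
            rw [i1, i2]
      _ = _ := Finset.card_product _ _

theorem E_le (n : ℕ) (r : Fin n → Fin n → Prop) (hi : ∀ a, ¬ r a a) :
    (E r Finset.univ).card ≤ Nat.card {ρ : Fin n ≃ Fin n // ∀ i j : Fin n, r i j → ρ i < ρ j} := by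
  have hmem : ∀ l : E r Finset.univ, ∀ i, i ∈ l.1 := by
    intro l i
    have h := (mem_E.1 l.2).1
    have : i ∈ (Finset.univ : Finset (Fin n)).val := Finset.mem_univ i
    rw [h] at this; exact this
  have hlen : ∀ l : E r Finset.univ, l.1.length = n := by
    intro l
    have h := congrArg Multiset.card (mem_E.1 l.2).1
    simpa using h.symm
  let f : (l : E r Finset.univ) → Fin n → Fin n := fun l i =>
    ⟨l.1.idxOf i, (List.idxOf_lt_length_of_mem (hmem l i)).trans_eq (hlen l)⟩
  have hinj : ∀ l, Function.Injective (f l) := by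
    intro l i j h
    have h : l.1.idxOf i = l.1.idxOf j := by simpa [f] using h
    exact (List.idxOf_inj (hmem l i)).1 h
  have hb : ∀ l, Function.Bijective (f l) := fun l => Finite.injective_iff_bijective.1 (hinj l)
  have hord : ∀ l i j, r i j → f l i < f l j := by
    intro l i j hij
    by_contra hlt
    have hne : f l i ≠ f l j := fun e => by
      have := hinj l e
      subst this
      exact hi _ hij
    have hlt : f l j < f l i := lt_of_le_of_ne (not_lt.1 hlt) hne.symm
    have hlt : l.1.idxOf j < l.1.idxOf i := hlt
    have hp := List.pairwise_iff_getElem.1 (mem_E.1 l.2).2 _ _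
      (List.idxOf_lt_length_of_mem (hmem l j)) (List.idxOf_lt_length_of_mem (hmem l i)) hlt
    simp at hp
    exact hp hij
  let F : E r Finset.univ → {ρ : Fin n ≃ Fin n // ∀ i j : Fin n, r i j → ρ i < ρ j} := fun l =>
    ⟨Equiv.ofBijective (f l) (hb l), hord l⟩
  have hF : Function.Injective F := by
    intro l l' h
    have h : ∀ i, f l i = f l' i := by
      intro i
      have := congrArg (fun ρ => ρ.1 i) h
      simpa [F] using this
    apply Subtype.ext
    apply List.ext_getElem
    · rw [hlen, hlen]
    · intro k h1 h2
      have hk : l.1.idxOf l.1[k] = l'.1.idxOf l.1[k] := by simpa [f] using h l.1[k]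
      have hnd : l.1.Nodup := by
        have := (Finset.univ : Finset (Fin n)).nodup
        rw [(mem_E.1 l.2).1] at this
        exact this
      rw [hnd.idxOf_getElem] at hk
      have := List.getElem_idxOf (List.idxOf_lt_length_of_mem (hmem l' l.1[k]))
      simp only [← hk] at this
      exact this.symm
  have := Nat.card_le_card_of_injective F hF
  simpa using this

end SidorenkoAux

/-- Sidorenko's inequality for permutation posets: for a permutation `σ` of `[n]`,
`e(P_σ) * e(P_σ̄) ≥ n!`, where the permutation poset `P_σ` has `i ≺ j` iff
`i < j` and `σ(i) < σ(j)`, and `σ̄(i) = σ(n+1-i)` (here `σ̄ i = σ i.rev` in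
0-based indexing). Linear extensions are encoded as bijections `ρ : Fin n ≃ Fin n`
that are strictly increasing on the partial order. -/
theorem sidorenko_permutation_posets (n : ℕ) (σ : Equiv.Perm (Fin n)) :
    Nat.factorial n ≤
      Nat.card {ρ : Fin n ≃ Fin n // ∀ i j : Fin n, i < j → σ i < σ j → ρ i < ρ j} *
      Nat.card {ρ : Fin n ≃ Fin n // ∀ i j : Fin n, i < j → σ i.rev < σ j.rev → ρ i < ρ j} := by
  refine (SidorenkoAux.main (r := fun i j : Fin n => i < j ∧ σ i < σ j)
    (fun i j : Fin n => j < i ∧ σ i < σ j) (fun a h => lt_irrefl _ h.1)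
    (fun a b c h h' => ⟨h.1.trans h'.1, h.2.trans h'.2⟩) (fun a h => lt_irrefl _ h.1)
    (fun a b c h h' => ⟨h'.1.trans h.1, h.2.trans h'.2⟩) ?_ n Finset.univ (by simp)).trans ?_
  · rintro a b (h | h) (h' | h')
    · exact lt_asymm h.1 h'.1
    · exact lt_asymm h.2 h'.2
    · exact lt_asymm h.2 h'.2
    · exact lt_asymm h.1 h'.1
  · refine Nat.mul_le_mul ((SidorenkoAux.E_le n _ (fun a h => lt_irrefl _ h.1)).trans ?_)
      ((SidorenkoAux.E_le n _ (fun a h => lt_irrefl _ h.1)).trans ?_)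
    · exact Nat.card_le_card_of_injective
        (fun ρ => ⟨ρ.1, fun i j h h' => ρ.2 i j ⟨h, h'⟩⟩)
        (fun ρ ρ' h => Subtype.ext (congrArg Subtype.val h :))
    · refine Nat.card_le_card_of_injective
        (fun ρ => ⟨Fin.revPerm.trans ρ.1,
          fun i j h h' => ρ.2 i.rev j.rev ⟨Fin.rev_lt_rev.2 h, h'⟩⟩) ?_
      intro ρ ρ' h
      apply Subtype.ext
      ext i
      have := congrArg (fun τ => τ.1 i.rev) h
      simp at this
      rw [this]
end

section
/- For every finite poset P on n elements, every element x, and every k with 1 < k < n, the counts N(k) of linear extensions ρ with ρ(x) = k satisfy N(k)^2 ≥ N(k−1)·N(k+1). -/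
theorem st_spectral {ι : Type} [Fintype ι] [DecidableEq ι] (M : Matrix ι ι ℝ)
    (hM : ∀ i j, M i j = M j i) (hnn : ∀ i j, 0 ≤ M i j) (h : ι → ℝ) (hpos : ∀ i, 0 < h i)
    (boch : ∀ v : ι → ℝ, ∑ i, v i * ∑ j, M i j * v j ≤
      ∑ i, h i * (∑ j, M i j * v j) ^ 2 / (∑ j, M i j * h j))
    (conn : ∀ ρ : ι → ℝ, (∀ i j, M i j ≠ 0 → ρ i = ρ j) →
      ∀ i j, (∑ l, M i l * h l) ≠ 0 → (∑ l, M j l * h l) ≠ 0 → ρ i = ρ j)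
    (v : ι → ℝ) (hv : ∑ i, v i * ∑ j, M i j * h j = 0) :
    ∑ i, v i * ∑ j, M i j * v j ≤ 0 := by
  set a : ι → ℝ := fun i => ∑ j, M i j * h j with ha
  have ann : ∀ i, 0 ≤ a i := fun i =>
    Finset.sum_nonneg fun j _ => mul_nonneg (hnn i j) (hpos j).le
  have azero : ∀ i, a i = 0 → ∀ j, M i j = 0 := by
    intro i hi j
    have := (Finset.sum_eq_zero_iff_of_nonneg
      (fun j _ => mul_nonneg (hnn i j) (hpos j).le)).1 hi j (Finset.mem_univ j)
    rcases mul_eq_zero.1 this with h1 | h1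
    · exact h1
    · exact absurd h1 (hpos j).ne'
  set d : ι → ℝ := fun i => if a i = 0 then 1 else a i / h i with hd
  have dpos : ∀ i, 0 < d i := by
    intro i
    simp only [hd]
    split_ifs with h0
    · exact one_pos
    · exact div_pos (lt_of_le_of_ne (ann i) (Ne.symm h0)) (hpos i)
  set q : ι → ℝ := fun i => Real.sqrt (d i) with hq
  have qpos : ∀ i, 0 < q i := fun i => Real.sqrt_pos.2 (dpos i)
  have qsq : ∀ i, q i * q i = d i := fun i => Real.mul_self_sqrt (dpos i).le
  set K : Matrix ι ι ℝ := Matrix.of fun i j => M i j / (q i * q j) with hK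
  have Kherm : K.IsHermitian := by
    ext i j
    simp [hK, Matrix.conjTranspose_apply, hM j i, mul_comm]
  set u := Kherm.eigenvectorBasis with hu
  set lam := Kherm.eigenvalues with hlam
  -- eigenvector equation
  have eig : ∀ k i, ∑ j, M i j / (q i * q j) * u k j = lam k * u k i := by
    intro k i
    have := congrFun (Kherm.mulVec_eigenvectorBasis k) i
    simpa [Matrix.mulVec, dotProduct, hK] using this
  -- expansion
  let c : ι → ℝ := fun k => ∑ i, u k i * (q i * v i)
  let y : EuclideanSpace ℝ ι := WithLp.toLp 2 (fun i => q i * v i)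
  let Ky : EuclideanSpace ℝ ι := WithLp.toLp 2 (fun i => (∑ j, M i j * v j) / q i)
  have e1 : ∑ i, v i * ∑ j, M i j * v j = ∑ k, lam k * c k ^ 2 := by
    have h1 : inner ℝ y Ky = ∑ i, v i * ∑ j, M i j * v j := by
      simp only [PiLp.inner_apply, y, Ky]
      refine Finset.sum_congr rfl fun i _ => ?_
      have := (qpos i).ne'
      simp only [RCLike.inner_apply, conj_trivial]
      field_simp
    rw [← h1, ← OrthonormalBasis.sum_inner_mul_inner u y Ky]
    refine Finset.sum_congr rfl fun k _ => ?_
    have h2 : inner ℝ y (u k) = c k := by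
      simp only [PiLp.inner_apply, y, c]
      refine Finset.sum_congr rfl fun i _ => ?_
      simp only [RCLike.inner_apply, conj_trivial]
    have h3 : inner ℝ (u k) Ky = lam k * c k := by
      simp only [PiLp.inner_apply, Ky, c, RCLike.inner_apply, conj_trivial]
      rw [Finset.mul_sum]
      have : ∀ i, lam k * (u k i * (q i * v i)) = ∑ j, M i j / (q j) * u k j * v i := by
        intro i
        rw [← mul_assoc, ← eig, Finset.sum_mul]
        refine Finset.sum_congr rfl fun j _ => ?_
        have := (qpos i).ne'
        have := (qpos j).ne'
        field_simp
      simp_rw [this]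
      rw [Finset.sum_comm]
      refine Finset.sum_congr rfl fun i _ => ?_
      rw [Finset.sum_div, Finset.sum_mul]
      refine Finset.sum_congr rfl fun j _ => ?_
      rw [hM i j]; ring
    rw [h2, h3]; ring
  rw [e1]
  refine Finset.sum_nonpos fun k _ => ?_
  rcases le_or_gt (lam k) 0 with hk | hk
  · exact mul_nonpos_of_nonpos_of_nonneg hk (sq_nonneg _)
  -- positive eigenvalue
  suffices hc : c k = 0 by rw [hc]; simp
  let x : ι → ℝ := fun i => u k i / q i
  have hx : ∀ i, ∑ j, M i j * x j = lam k * (d i * x i) := by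
    intro i
    have h1 := eig k i
    have h2 : ∑ j, M i j * x j = q i * ∑ j, M i j / (q i * q j) * u k j := by
      rw [Finset.mul_sum]
      refine Finset.sum_congr rfl fun j _ => ?_
      have := (qpos i).ne'
      have := (qpos j).ne'
      simp only [x]
      field_simp
    rw [h2, h1, ← qsq]
    have := (qpos i).ne'
    simp only [x]
    field_simp
  have hx0 : ∀ i, a i = 0 → x i = 0 := by
    intro i hi
    have h1 := hx i
    rw [Finset.sum_eq_zero (fun j _ => by rw [azero i hi j, zero_mul])] at h1
    rcases mul_eq_zero.1 h1.symm with h2 | h2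
    · exact absurd h2 hk.ne'
    · exact (mul_eq_zero.1 h2).resolve_left (dpos i).ne'
  have hdx : ∀ i, d i * x i = a i / h i * x i := by
    intro i
    by_cases h0 : a i = 0
    · rw [hx0 i h0]; simp
    · simp [hd, h0]
  set W := ∑ i, d i * x i ^ 2 with hW
  have hW0 : 0 ≤ W := Finset.sum_nonneg fun i _ => mul_nonneg (dpos i).le (sq_nonneg _)
  have hxx : ∑ i, x i * ∑ j, M i j * x j = lam k * W := by
    rw [hW, Finset.mul_sum]
    refine Finset.sum_congr rfl fun i _ => ?_
    rw [hx]; ring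
  have hb : lam k * W ≤ lam k ^ 2 * W := by
    rw [← hxx]
    refine (boch x).trans (le_of_eq ?_)
    rw [hW, Finset.mul_sum]
    refine Finset.sum_congr rfl fun i _ => ?_
    rw [hx]
    by_cases h0 : a i = 0
    · rw [hx0 i h0]; simp
    · have e : d i = a i / h i := by simp [hd, h0]
      have := (hpos i).ne'
      change h i * (lam k * (d i * x i)) ^ 2 / a i = _
      rw [e]
      field_simp
  have hperron : ∑ i, ∑ j, M i j * (h i * h j) * (x i / h i - x j / h j) ^ 2 =
      2 * (W - lam k * W) := by
    have h1 : ∀ i j, M i j * (h i * h j) * (x i / h i - x j / h j) ^ 2 =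
        M i j * h j * (x i ^ 2 / h i) + M j i * h i * (x j ^ 2 / h j)
          - 2 * (x i * (M i j * x j)) := by
      intro i j
      have := (hpos i).ne'
      have := (hpos j).ne'
      rw [hM j i]
      field_simp
      ring
    simp_rw [h1, Finset.sum_sub_distrib, Finset.sum_add_distrib]
    have h2 : ∑ i, ∑ j, M i j * h j * (x i ^ 2 / h i) = W := by
      rw [hW]
      refine Finset.sum_congr rfl fun i _ => ?_
      rw [← Finset.sum_mul]
      change a i * _ = _
      rw [pow_two, ← mul_assoc, hdx]; ring
    have h3 : ∑ i, ∑ j, M j i * h i * (x j ^ 2 / h j) = W := by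
      rw [Finset.sum_comm]; exact h2
    have h4 : ∑ i, ∑ j, 2 * (x i * (M i j * x j)) = 2 * (lam k * W) := by
      rw [← hxx]
      simp_rw [Finset.mul_sum]
    rw [h2, h3, h4]; ring
  have hterm : ∀ i j, 0 ≤ M i j * (h i * h j) * (x i / h i - x j / h j) ^ 2 := fun i j =>
    mul_nonneg (mul_nonneg (hnn i j) (mul_pos (hpos i) (hpos j)).le) (sq_nonneg _)
  have hle : W ≤ lam k * W := by
    by_contra hcon
    push Not at hcon
    have : lam k ^ 2 * W < lam k * W := by nlinarith
    linarith
  have hz : ∀ i j, M i j ≠ 0 → x i / h i = x j / h j := by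
    have hs : ∑ i, ∑ j, M i j * (h i * h j) * (x i / h i - x j / h j) ^ 2 = 0 := by
      apply le_antisymm
      · rw [hperron]; linarith
      · exact Finset.sum_nonneg fun i _ => Finset.sum_nonneg fun j _ => hterm i j
    intro i j hij
    have h1 := (Finset.sum_eq_zero_iff_of_nonneg
      (fun i _ => Finset.sum_nonneg fun j _ => hterm i j)).1 hs i (Finset.mem_univ i)
    have h2 := (Finset.sum_eq_zero_iff_of_nonneg
      (fun j _ => hterm i j)).1 h1 j (Finset.mem_univ j)
    have h3 := (mul_eq_zero.1 h2).resolve_left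
      (mul_ne_zero hij (mul_ne_zero (hpos i).ne' (hpos j).ne'))
    have := pow_eq_zero_iff (two_ne_zero) |>.1 h3
    linarith
  have hconn := conn _ hz
  have hck : c k = ∑ i, v i * (a i * (x i / h i)) := by
    refine Finset.sum_congr rfl fun i _ => ?_
    have h1 : u k i = q i * x i := by
      have := (qpos i).ne'
      simp only [x]; field_simp
    have h2 : a i * (x i / h i) = d i * x i := by rw [hdx]; ring
    rw [h2, h1, ← qsq]; ring
  rw [hck]
  by_cases hex : ∃ i0, a i0 ≠ 0
  · obtain ⟨i0, hi0⟩ := hex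
    have : ∀ i, v i * (a i * (x i / h i)) = (v i * a i) * (x i0 / h i0) := by
      intro i
      by_cases h0 : a i = 0
      · rw [h0]; simp
      · rw [hconn i i0 h0 hi0]; ring
    simp_rw [this]
    rw [← Finset.sum_mul]
    change (∑ i, v i * a i) * _ = 0
    rw [show (∑ i, v i * a i) = 0 from hv, zero_mul]
  · push Not at hex
    exact Finset.sum_eq_zero fun i _ => by rw [hex i]; simp

/-- The substitution map on vectors: `T r i v j = v i` if `i ≺ j`, else `v j`. -/
noncomputable def stT {ι : Type} (r : ι → ι → Prop) (i : ι) (v : ι → ℝ) (j : ι) : ℝ :=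
  open Classical in if r i j then v i else v j

theorem st_pull_term {ι : Type} (r : ι → ι → Prop)
    (hirr : ∀ i, ¬ r i i) (htr : ∀ i j l, r i j → r j l → r i l)
    (h : ι → ℝ) (hpos : ∀ i, 0 < h i) (hh : ∀ i j, r i j → h i = h j)
    (G : ι → ι → ι → ℝ) (Gnn : ∀ i j l, 0 ≤ G i j l)
    (G12 : ∀ i j l, ¬ r i j → ¬ r j i → G i j l = G j i l)
    (G23 : ∀ i j l, ¬ r j l → ¬ r l j → G i j l = G i l j)
    (Z12 : ∀ i j l, r j i → G i j l = 0)
    (Z23 : ∀ i j l, r l j → G i j l = 0)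
    (Z13 : ∀ i j l, r l i → G i j l = 0) (v : ι → ℝ)
    (F : ι → ι → ι → ℝ)
    (hF : ∀ i j l, F i j l = G i j l * (h i * (stT r i v j * stT r j (stT r i v) l)
      - v i * stT r i v j * h l)) (i j l : ι) :
    0 ≤ F i j l + F i l j + F j i l + F j l i + F l i j + F l j i := by
  have as : ∀ a b, r a b → ¬ r b a := fun a b h1 h2 => hirr a (htr a b a h1 h2)
  simp only [hF]
  have g1 := G12 i j l
  have g2 := G12 i l j
  have g3 := G12 j l i
  have k1 := G23 i j l
  have k2 := G23 j i l
  have k3 := G23 l i j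
  have p := Gnn i j l
  have p2 := Gnn i l j
  have p3 := Gnn j l i
  have hi := hpos i
  have hj := hpos j
  have hl := hpos l
  have sq1 := mul_nonneg (mul_nonneg p hi.le) (sq_nonneg (v i - v j))
  have sq2 := mul_nonneg (mul_nonneg p2 hi.le) (sq_nonneg (v i - v l))
  have sq3 := mul_nonneg (mul_nonneg p3 hj.le) (sq_nonneg (v j - v l))
  by_cases hij : r i j <;> by_cases hji : r j i <;> by_cases hil : r i l <;>
  by_cases hli : r l i <;> by_cases hjl : r j l <;> by_cases hlj : r l j <;>
  first
  | exact absurd hji (as _ _ hij)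
  | exact absurd hli (as _ _ hil)
  | exact absurd hlj (as _ _ hjl)
  | exact absurd (htr _ _ _ hij hjl) hil
  | exact absurd (htr _ _ _ hil hlj) hij
  | exact absurd (htr _ _ _ hji hil) hjl
  | exact absurd (htr _ _ _ hjl hli) hji
  | exact absurd (htr _ _ _ hli hij) hlj
  | exact absurd (htr _ _ _ hlj hji) hli
  | skip
  all_goals
    (try rw [Z12 i j l (by assumption)]); (try rw [Z12 i l j (by assumption)])
    (try rw [Z12 j i l (by assumption)]); (try rw [Z12 j l i (by assumption)])
    (try rw [Z12 l i j (by assumption)]); (try rw [Z12 l j i (by assumption)])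
    (try rw [Z13 i j l (by assumption)]); (try rw [Z13 i l j (by assumption)])
    (try rw [Z13 j i l (by assumption)]); (try rw [Z13 j l i (by assumption)])
    (try rw [Z13 l i j (by assumption)]); (try rw [Z13 l j i (by assumption)])
    (try rw [Z23 i j l (by assumption)]); (try rw [Z23 i l j (by assumption)])
    (try rw [Z23 j i l (by assumption)]); (try rw [Z23 j l i (by assumption)])
    (try rw [Z23 l i j (by assumption)]); (try rw [Z23 l j i (by assumption)])
    (try have q1 := hh _ _ hij); (try have q1 := hh _ _ hji)
    (try have q2 := hh _ _ hil); (try have q2 := hh _ _ hli)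
    (try have q3 := hh _ _ hjl); (try have q3 := hh _ _ hlj)
    simp only [stT, hij, hji, hil, hli, hjl, hlj, if_true, if_false, not_true, not_false_iff,
      forall_true_left, IsEmpty.forall_iff] at g1 g2 g3 k1 k2 k3 ⊢
    simp only [*] at g1 g2 g3 k1 k2 k3 sq1 sq2 sq3 ⊢
    first | nlinarith | (rw [k1]; apply le_of_eq; ring) | grind

theorem st_sym_sum {ι : Type} [Fintype ι] (F : ι → ι → ι → ℝ)
    (hF : ∀ i j l, 0 ≤ F i j l + F i l j + F j i l + F j l i + F l i j + F l j i) :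
    0 ≤ ∑ i, ∑ j, ∑ l, F i j l := by
  have h0 : 0 ≤ ∑ i, ∑ j, ∑ l, (F i j l + F i l j + F j i l + F j l i + F l i j + F l j i) :=
    Finset.sum_nonneg fun i _ => Finset.sum_nonneg fun j _ => Finset.sum_nonneg fun l _ => hF i j l
  simp only [Finset.sum_add_distrib] at h0
  have e1 : ∀ H : ι → ι → ι → ℝ, ∑ i, ∑ j, ∑ l, H i l j = ∑ i, ∑ j, ∑ l, H i j l := fun H =>
    Finset.sum_congr rfl fun i _ => Finset.sum_comm
  have e2 : ∀ H : ι → ι → ι → ℝ, ∑ i, ∑ j, ∑ l, H j i l = ∑ i, ∑ j, ∑ l, H i j l := fun H =>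
    Finset.sum_comm
  have e3 : ∑ i, ∑ j, ∑ l, F j l i = ∑ i, ∑ j, ∑ l, F i j l := by
    rw [e2 (fun a b c => F a c b), e1]
  have e4 : ∑ i, ∑ j, ∑ l, F l i j = ∑ i, ∑ j, ∑ l, F i j l := by
    rw [e1 (fun a b c => F b a c), e2]
  have e5 : ∑ i, ∑ j, ∑ l, F l j i = ∑ i, ∑ j, ∑ l, F i j l := by
    rw [e2 (fun a b c => F c a b), e4]
  linarith [e1 F, e2 F]

/-- The bilinear form attached to a two letter word weight `m`. -/
noncomputable def stB {ι : Type} [Fintype ι] (r : ι → ι → Prop) (m : ι → ι → ℝ)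
    (v w : ι → ℝ) : ℝ := ∑ i, ∑ j, m i j * (v i * stT r i w j)

theorem stT_h {ι : Type} (r : ι → ι → Prop) (h : ι → ℝ) (hh : ∀ i j, r i j → h i = h j) (i : ι) :
    stT r i h = h := by
  funext j
  unfold stT
  split_ifs with h1
  · exact hh i j h1
  · rfl

/-- Matrix of the form `stB`. -/
noncomputable def stMat {ι : Type} [Fintype ι] (r : ι → ι → Prop) (m : ι → ι → ℝ) :
    Matrix ι ι ℝ := open Classical in Matrix.of fun i j =>
  (if r i j then 0 else m i j) + (if i = j then ∑ l, (if r i l then m i l else 0) else 0)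

theorem stMat_mul {ι : Type} [Fintype ι] (r : ι → ι → Prop) (m : ι → ι → ℝ) (v : ι → ℝ) (i : ι) :
    ∑ j, stMat r m i j * v j = ∑ j, m i j * stT r i v j := by
  classical
  simp only [stMat, Matrix.of_apply, add_mul, Finset.sum_add_distrib]
  have : ∑ j, (if i = j then ∑ l, (if r i l then m i l else 0) else 0) * v j
      = ∑ l, (if r i l then m i l * v i else 0) := by
    rw [Finset.sum_eq_single i]
    · simp [Finset.sum_mul]
    · intro b _ hb; simp [Ne.symm hb]
    · simp
  rw [this, ← Finset.sum_add_distrib]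
  refine Finset.sum_congr rfl fun j _ => ?_
  unfold stT
  by_cases hr : r i j <;> simp [hr]

theorem st_step {ι : Type} [Fintype ι] (r : ι → ι → Prop)
    (hirr : ∀ i, ¬ r i i) (htr : ∀ i j l, r i j → r j l → r i l)
    (h : ι → ℝ) (hpos : ∀ i, 0 < h i) (hh : ∀ i j, r i j → h i = h j)
    (G : ι → ι → ι → ℝ) (Gnn : ∀ i j l, 0 ≤ G i j l)
    (G12 : ∀ i j l, ¬ r i j → ¬ r j i → G i j l = G j i l)
    (G23 : ∀ i j l, ¬ r j l → ¬ r l j → G i j l = G i l j)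
    (Z12 : ∀ i j l, r j i → G i j l = 0)
    (Z23 : ∀ i j l, r l j → G i j l = 0)
    (Z13 : ∀ i j l, r l i → G i j l = 0)
    (m : ι → ι → ℝ) (hm : ∀ i j, m i j = ∑ l, G i j l * h l)
    (hyp : ∀ i v, stB r (G i) v v * stB r (G i) h h ≤ stB r (G i) v h ^ 2)
    (conn : ∀ ρ : ι → ℝ, (∀ i j, ¬ r i j → m i j ≠ 0 → ρ i = ρ j) →
      ∀ i j, (∃ l, m i l ≠ 0) → (∃ l, m j l ≠ 0) → ρ i = ρ j)
    (v w : ι → ℝ) (hw : ∀ i, 0 ≤ w i) :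
    stB r m v v * stB r m w w ≤ stB r m v w ^ 2 := by
  classical
  set M := stMat r m with hMdef
  have mnn : ∀ i j, 0 ≤ m i j := fun i j => by
    rw [hm]; exact Finset.sum_nonneg fun l _ => mul_nonneg (Gnn i j l) (hpos l).le
  have Mnn : ∀ i j, 0 ≤ M i j := by
    intro i j
    simp only [hMdef, stMat, Matrix.of_apply]
    apply add_nonneg
    · split_ifs
      · exact le_rfl
      · exact mnn i j
    · split_ifs
      · refine Finset.sum_nonneg fun l _ => ?_
        split_ifs
        · exact mnn i l
        · exact le_rfl
      · exact le_rfl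
  have msym : ∀ i j, ¬ r i j → ¬ r j i → m i j = m j i := fun i j h1 h2 => by
    rw [hm, hm]; exact Finset.sum_congr rfl fun l _ => by rw [G12 i j l h1 h2]
  have mz : ∀ i j, r j i → m i j = 0 := fun i j h1 => by
    rw [hm]; exact Finset.sum_eq_zero fun l _ => by rw [Z12 i j l h1, zero_mul]
  have Msym : ∀ i j, M i j = M j i := by
    intro i j
    by_cases hij : i = j
    · rw [hij]
    · simp only [hMdef, stMat, Matrix.of_apply, if_neg hij, if_neg (Ne.symm hij), add_zero]
      by_cases h1 : r i j <;> by_cases h2 : r j i <;> simp only [h1, h2, if_true, if_false]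
      · exact (mz j i h1).symm
      · exact mz i j h2
      · exact msym i j h1 h2
  have BM : ∀ v w, stB r m v w = ∑ i, v i * ∑ j, M i j * w j := by
    intro v w
    unfold stB
    refine Finset.sum_congr rfl fun i _ => ?_
    rw [hMdef, stMat_mul, Finset.mul_sum]
    exact Finset.sum_congr rfl fun j _ => by ring
  have Bsym : ∀ v w, stB r m v w = stB r m w v := by
    intro v w
    rw [BM, BM]
    simp only [Finset.mul_sum]
    rw [Finset.sum_comm]
    refine Finset.sum_congr rfl fun i _ => Finset.sum_congr rfl fun j _ => ?_
    rw [Msym]; ring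
  -- row identities
  have rowA : ∀ i v, ∑ j, M i j * v j = stB r (G i) (stT r i v) h := by
    intro i v
    rw [hMdef, stMat_mul]
    unfold stB
    refine Finset.sum_congr rfl fun j _ => ?_
    rw [hm, Finset.sum_mul]
    refine Finset.sum_congr rfl fun l _ => ?_
    rw [stT_h r h hh]; ring
  have rowh : ∀ i, ∑ j, M i j * h j = stB r (G i) h h := by
    intro i; rw [rowA, stT_h r h hh]
  have rownn : ∀ i, 0 ≤ ∑ j, M i j * h j := fun i =>
    Finset.sum_nonneg fun j _ => mul_nonneg (Mnn i j) (hpos j).le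
  have boch : ∀ v : ι → ℝ, ∑ i, v i * ∑ j, M i j * v j ≤
      ∑ i, h i * (∑ j, M i j * v j) ^ 2 / (∑ j, M i j * h j) := by
    intro v
    have s1 : ∑ i, h i * stB r (G i) (stT r i v) (stT r i v) ≤
        ∑ i, h i * (∑ j, M i j * v j) ^ 2 / (∑ j, M i j * h j) := by
      refine Finset.sum_le_sum fun i _ => ?_
      rw [mul_div_assoc]
      refine mul_le_mul_of_nonneg_left ?_ (hpos i).le
      rcases (rownn i).eq_or_lt with h0 | h0
      · have hG : ∀ j l, G i j l = 0 := by
          intro j l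
          have h1 := h0.symm
          rw [rowh] at h1
          unfold stB at h1
          simp only [stT_h r h hh] at h1
          have nn : ∀ j l, 0 ≤ G i j l * (h j * h l) := fun j l =>
            mul_nonneg (Gnn i j l) (mul_pos (hpos j) (hpos l)).le
          have h2 := (Finset.sum_eq_zero_iff_of_nonneg
            (fun j _ => Finset.sum_nonneg fun l _ => nn j l)).1 h1 j (Finset.mem_univ j)
          have h3 := (Finset.sum_eq_zero_iff_of_nonneg
            (fun l _ => nn j l)).1 h2 l (Finset.mem_univ l)
          exact (mul_eq_zero.1 h3).resolve_right (mul_pos (hpos j) (hpos l)).ne'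
        rw [← h0]
        simp [stB, hG]
      · rw [le_div_iff₀ h0, rowA i v, rowh]
        exact hyp i _
    refine le_trans ?_ s1
    rw [← sub_nonneg]
    have := st_sym_sum (fun i j l => G i j l * (h i * (stT r i v j * stT r j (stT r i v) l)
      - v i * stT r i v j * h l)) (st_pull_term r hirr htr h hpos hh G Gnn G12 G23 Z12 Z23 Z13 v _
        (fun _ _ _ => rfl))
    refine this.trans (le_of_eq ?_)
    rw [← Finset.sum_sub_distrib]
    refine Finset.sum_congr rfl fun i _ => ?_
    rw [hMdef, stMat_mul, stB, Finset.mul_sum, Finset.mul_sum, ← Finset.sum_sub_distrib]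
    refine Finset.sum_congr rfl fun j _ => ?_
    rw [hm, Finset.sum_mul, Finset.mul_sum, Finset.mul_sum, ← Finset.sum_sub_distrib]
    refine Finset.sum_congr rfl fun l _ => ?_
    ring
  have conn' : ∀ ρ : ι → ℝ, (∀ i j, M i j ≠ 0 → ρ i = ρ j) →
      ∀ i j, (∑ l, M i l * h l) ≠ 0 → (∑ l, M j l * h l) ≠ 0 → ρ i = ρ j := by
    intro ρ hρ i j hi hj
    have aux : ∀ i, (∑ l, M i l * h l) ≠ 0 → ∃ l, m i l ≠ 0 := by
      intro i hi
      by_contra hcon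
      push Not at hcon
      apply hi
      rw [hMdef, stMat_mul]
      exact Finset.sum_eq_zero fun l _ => by rw [hcon l, zero_mul]
    refine conn ρ ?_ i j (aux i hi) (aux j hj)
    intro a b hab hmab
    by_cases e : a = b
    · rw [e]
    · apply hρ
      simpa [hMdef, stMat, hab, e] using hmab
  have neg := st_spectral M Msym Mnn h hpos boch conn'
  have wwnn : 0 ≤ stB r m w w := by
    rw [BM]
    exact Finset.sum_nonneg fun i _ => mul_nonneg (hw i)
      (Finset.sum_nonneg fun j _ => mul_nonneg (Mnn i j) (hw j))
  rcases wwnn.eq_or_lt with h0 | h0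
  · rw [← h0, mul_zero]; exact sq_nonneg _
  have hwh : 0 < stB r m w h := by
    have nn : ∀ i, 0 ≤ w i * ∑ j, M i j * h j := fun i => mul_nonneg (hw i) (rownn i)
    have : 0 ≤ stB r m w h := by
      rw [BM]; exact Finset.sum_nonneg fun i _ => nn i
    rcases this.eq_or_lt with h1 | h1
    · exfalso
      rw [BM] at h1
      apply h0.ne'
      rw [BM]
      refine Finset.sum_eq_zero fun i _ => ?_
      have h2 := (Finset.sum_eq_zero_iff_of_nonneg (fun i _ => nn i)).1 h1.symm i
        (Finset.mem_univ i)
      rcases mul_eq_zero.1 h2 with h3 | h3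
      · rw [h3, zero_mul]
      · have h4 : ∀ j, M i j = 0 := fun j => by
          have := (Finset.sum_eq_zero_iff_of_nonneg
            (fun j _ => mul_nonneg (Mnn i j) (hpos j).le)).1 h3 j (Finset.mem_univ j)
          exact (mul_eq_zero.1 this).resolve_right (hpos j).ne'
        simp [h4]
    · exact h1
  set A := stB r m v h with hA
  set B := stB r m w h with hB
  have lin : ∀ (x : ι → ℝ), stB r m (fun i => B * v i - A * w i) x
      = B * stB r m v x - A * stB r m w x := by
    intro x
    simp only [BM, Finset.mul_sum]
    rw [← Finset.sum_sub_distrib]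
    refine Finset.sum_congr rfl fun i _ => ?_
    rw [← Finset.sum_sub_distrib]
    exact Finset.sum_congr rfl fun j _ => by ring
  have key := neg (fun i => B * v i - A * w i) (by
    rw [← BM, lin, ← hA, ← hB]; ring)
  rw [← BM, lin, Bsym v, Bsym w, lin, lin, Bsym w v] at key
  have hB2 : 0 < B ^ 2 := by positivity
  have : B ^ 2 * (stB r m v v * stB r m w w) ≤ B ^ 2 * stB r m v w ^ 2 := by
    nlinarith [sq_nonneg (B * stB r m v w - A * stB r m w w), mul_nonneg h0.le (sub_nonneg.2 key)]
  exact le_of_mul_le_mul_left this hB2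

set_option linter.unusedSectionVars false
/-- The strict order on letters: `(x, true)` are bottom letters, `(x, false)` are top letters. -/
def stR {X : Type} [PartialOrder X] (i j : X × Bool) : Prop :=
  i.2 = j.2 ∧ ((i.2 = true ∧ i.1 < j.1) ∨ (i.2 = false ∧ j.1 < i.1))

/-- The letter `i` can be removed from `S`. -/
def stExt {X : Type} [PartialOrder X] (S : Finset X) (i : X × Bool) : Prop :=
  i.1 ∈ S ∧ ∀ y ∈ S, ¬ stR (y, i.2) i

/-- Weighted removal operator. -/
noncomputable def stD {X : Type} [PartialOrder X] [DecidableEq X] (W : X × Bool → ℝ)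
    (i : X × Bool) (φ : Finset X → ℝ) (S : Finset X) : ℝ :=
  open Classical in if stExt S i then W i * φ (S.erase i.1) else 0

/-- Weighted number of linear extensions, with fuel. -/
noncomputable def stNf {X : Type} [Fintype X] [PartialOrder X] [DecidableEq X]
    (W : X × Bool → ℝ) : ℕ → Finset X → ℕ → ℝ
  | 0, _, a => if a = 0 then 1 else 0
  | n + 1, S, 0 => ∑ x : X, stD W (x, false) (fun S' => stNf W n S' 0) S
  | n + 1, S, a + 1 => ∑ x : X, stD W (x, true) (fun S' => stNf W n S' a) S

/-- Weighted number of linear extensions. -/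
noncomputable def stN {X : Type} [Fintype X] [PartialOrder X] [DecidableEq X]
    (W : X × Bool → ℝ) (a : ℕ) (S : Finset X) : ℝ := stNf W S.card S a

section
variable {X : Type} [Fintype X] [PartialOrder X] [DecidableEq X] (W : X × Bool → ℝ)

theorem stR_irr (i : X × Bool) : ¬ stR i i := by
  rintro ⟨-, ⟨-, h⟩ | ⟨-, h⟩⟩ <;> exact lt_irrefl _ h

theorem stR_trans (i j l : X × Bool) (h1 : stR i j) (h2 : stR j l) : stR i l := by
  obtain ⟨e1, h1⟩ := h1
  obtain ⟨e2, h2⟩ := h2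
  refine ⟨e1.trans e2, ?_⟩
  rcases h1 with ⟨a, h1⟩ | ⟨a, h1⟩ <;> rcases h2 with ⟨b, h2⟩ | ⟨b, h2⟩
  · exact Or.inl ⟨a, h1.trans h2⟩
  · rw [e1, b] at a; cases a
  · rw [e1, b] at a; cases a
  · exact Or.inr ⟨a, h2.trans h1⟩

theorem stR_flip (x y : X) (σ τ : Bool) (h : σ ≠ τ) : stR (x, σ) (y, σ) ↔ stR (y, τ) (x, τ) := by
  cases σ <;> cases τ <;> simp_all [stR]

theorem stD_congr (i : X × Bool) (φ ψ : Finset X → ℝ) (S : Finset X)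
    (h : stExt S i → φ (S.erase i.1) = ψ (S.erase i.1)) : stD W i φ S = stD W i ψ S := by
  unfold stD
  split_ifs with h1
  · rw [h h1]
  · rfl

theorem stD_sum {κ : Type} [Fintype κ] (i : X × Bool) (φ : κ → Finset X → ℝ) (S : Finset X) :
    stD W i (fun S' => ∑ k, φ k S') S = ∑ k, stD W i (φ k) S := by
  unfold stD
  split_ifs
  · rw [Finset.mul_sum]
  · simp

theorem stD_lin (i : X × Bool) (φ ψ : Finset X → ℝ) (s t : ℝ) (S : Finset X) :
    stD W i (fun S' => s * φ S' + t * ψ S') S = s * stD W i φ S + t * stD W i ψ S := by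
  unfold stD
  split_ifs
  · ring
  · simp

theorem stD_nonneg (hW : ∀ i, 0 ≤ W i) (i : X × Bool) (φ : Finset X → ℝ) (S : Finset X)
    (h : ∀ S, 0 ≤ φ S) : 0 ≤ stD W i φ S := by
  unfold stD
  split_ifs
  · exact mul_nonneg (hW i) (h _)
  · exact le_rfl

theorem stExt_swap (i j : X × Bool) (hne : i.1 ≠ j.1) (hij : ¬ stR i j)
    (S : Finset X) (h1 : stExt S i) (h2 : stExt (S.erase i.1) j) :
    stExt S j ∧ stExt (S.erase j.1) i := by
  obtain ⟨x, σ⟩ := i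
  obtain ⟨y, τ⟩ := j
  obtain ⟨hx, h1⟩ := h1
  obtain ⟨hy, h2⟩ := h2
  have hyS := Finset.mem_of_mem_erase hy
  refine ⟨⟨hyS, ?_⟩, ⟨Finset.mem_erase.2 ⟨hne, hx⟩, fun u hu => h1 u (Finset.mem_of_mem_erase hu)⟩⟩
  intro u hu
  by_cases hux : u = x
  · subst hux
    by_cases hst : σ = τ
    · subst hst; exact hij
    · intro h3
      exact h1 y hyS ((stR_flip y u σ τ hst).2 h3)
  · exact h2 u (Finset.mem_erase.2 ⟨hux, hu⟩)

theorem stD_comm (i j : X × Bool) (hij : ¬ stR i j) (hji : ¬ stR j i) (φ : Finset X → ℝ)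
    (S : Finset X) : stD W i (stD W j φ) S = stD W j (stD W i φ) S := by
  by_cases hne : i.1 = j.1
  · have z : ∀ a b : X × Bool, a.1 = b.1 → stD W a (stD W b φ) S = 0 := by
      intro a b hab
      unfold stD
      split_ifs with h1 h2
      · exact absurd h2.1 (by rw [hab]; simp)
      · simp
      · rfl
    rw [z i j hne, z j i hne.symm]
  · by_cases h1 : stExt S i ∧ stExt (S.erase i.1) j
    · have h2 := stExt_swap i j hne hij S h1.1 h1.2
      simp only [stD, h1.1, h1.2, h2.1, h2.2, if_true]
      rw [Finset.erase_right_comm]; ring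
    · have h2 : ¬ (stExt S j ∧ stExt (S.erase j.1) i) := fun h2 =>
        h1 (stExt_swap j i (Ne.symm hne) hji S h2.1 h2.2)
      have z : ∀ a b : X × Bool, ¬ (stExt S a ∧ stExt (S.erase a.1) b) →
          stD W a (stD W b φ) S = 0 := by
        intro a b hab
        unfold stD
        split_ifs with h3 h4
        · exact absurd ⟨h3, h4⟩ hab
        · simp
        · rfl
      rw [z i j h1, z j i h2]

theorem stD_zero (i j : X × Bool) (hji : stR j i) (φ : Finset X → ℝ)
    (S : Finset X) : stD W i (stD W j φ) S = 0 := by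
  unfold stD
  split_ifs with h1 h2
  · exfalso
    apply h1.2 j.1 (Finset.mem_of_mem_erase h2.1)
    rw [← hji.1]; exact hji
  · simp
  · rfl

theorem stD_zero' (i k j : X × Bool) (hji : stR j i) (φ : Finset X → ℝ)
    (S : Finset X) : stD W i (stD W k (stD W j φ)) S = 0 := by
  unfold stD
  split_ifs with h1 h2 h3
  · exfalso
    apply h1.2 j.1 (Finset.mem_of_mem_erase (Finset.mem_of_mem_erase h3.1))
    rw [← hji.1]; exact hji
  · simp
  · simp
  · rfl

theorem stD_out (i : X × Bool) (φ : Finset X → ℝ) (S : Finset X) (h : i.1 ∉ S) :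
    stD W i φ S = 0 := by
  unfold stD
  rw [if_neg fun h1 => h h1.1]

theorem stN_one (a : ℕ) (S : Finset X) :
    stN W (a + 1) S = ∑ x : X, stD W (x, true) (stN W a) S := by
  rcases S.eq_empty_or_nonempty with rfl | hS
  · rw [Finset.sum_eq_zero fun x _ => stD_out W _ _ _ (by simp)]
    simp [stN, stNf]
  · obtain ⟨n, hn⟩ := Nat.exists_eq_succ_of_ne_zero (Finset.card_pos.2 hS).ne'
    rw [stN, hn, Nat.succ_eq_add_one, stNf]
    refine Finset.sum_congr rfl fun x _ => stD_congr W _ _ _ _ fun h => ?_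
    rw [stN, Finset.card_erase_of_mem h.1, hn]; rfl

theorem stN_two (a : ℕ) (S : Finset X) (ha : a < S.card) :
    stN W a S = ∑ x : X, stD W (x, false) (stN W a) S := by
  induction a generalizing S with
  | zero =>
    obtain ⟨n, hn⟩ := Nat.exists_eq_succ_of_ne_zero ha.ne'
    rw [stN, hn, Nat.succ_eq_add_one, stNf]
    refine Finset.sum_congr rfl fun x _ => stD_congr W _ _ _ _ fun h => ?_
    rw [stN, Finset.card_erase_of_mem h.1, hn]; rfl
  | succ a ih =>
    have e1 : stN W (a + 1) S = ∑ x : X, ∑ y : X, stD W (x, true) (stD W (y, false) (stN W a)) S := by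
      rw [stN_one]
      refine Finset.sum_congr rfl fun x _ => ?_
      rw [← stD_sum]
      refine stD_congr W _ _ _ _ fun h => ih _ ?_
      rw [Finset.card_erase_of_mem h.1]; omega
    have e2 : ∑ x : X, stD W (x, false) (stN W (a + 1)) S =
        ∑ y : X, ∑ x : X, stD W (y, false) (stD W (x, true) (stN W a)) S := by
      refine Finset.sum_congr rfl fun x _ => ?_
      rw [← stD_sum]
      exact stD_congr W _ _ _ _ fun h => stN_one W a _
    rw [e1, e2, Finset.sum_comm]
    refine Finset.sum_congr rfl fun x _ => Finset.sum_congr rfl fun y _ => ?_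
    exact stD_comm W _ _ (fun h => by cases h.1) (fun h => by cases h.1) _ _

theorem stN_nonneg (hW : ∀ i, 0 ≤ W i) (a : ℕ) (S : Finset X) : 0 ≤ stN W a S := by
  have : ∀ n S a, 0 ≤ stNf W n S a := by
    intro n
    induction n with
    | zero => intro S a; unfold stNf; split_ifs <;> norm_num
    | succ n ih =>
      intro S a
      cases a with
      | zero => unfold stNf; exact Finset.sum_nonneg fun x _ => stD_nonneg W hW _ _ _ fun S => ih S _
      | succ a =>
        unfold stNf; exact Finset.sum_nonneg fun x _ => stD_nonneg W hW _ _ _ fun S => ih S _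
  exact this _ _ _

theorem stExt_exists (S : Finset X) (hS : S.Nonempty) (σ : Bool) : ∃ x, stExt S (x, σ) := by
  cases σ with
  | true =>
    obtain ⟨x, hx⟩ := S.exists_minimal hS
    refine ⟨x, hx.1, fun y hy h => ?_⟩
    simp only [stR, true_and, reduceCtorEq, false_and, or_false] at h
    exact absurd (hx.2 hy h.le) (not_le_of_gt h)
  | false =>
    obtain ⟨x, hx⟩ := S.exists_maximal hS
    refine ⟨x, hx.1, fun y hy h => ?_⟩
    simp only [stR, true_and, reduceCtorEq, false_and, false_or] at h
    exact absurd (hx.2 hy h.le) (not_le_of_gt h)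

theorem stN_pos (hW : ∀ i, 0 < W i) (a : ℕ) (S : Finset X) (ha : a ≤ S.card) : 0 < stN W a S := by
  have hW' := fun i => (hW i).le
  have key : ∀ (σ : Bool) (b : ℕ) (S : Finset X), S.Nonempty →
      (∀ x ∈ S, 0 < stN W b (S.erase x)) → 0 < ∑ x : X, stD W (x, σ) (stN W b) S := by
    intro σ b S hS h
    obtain ⟨x, hx⟩ := stExt_exists S hS σ
    refine Finset.sum_pos' (fun y _ => stD_nonneg W hW' _ _ _ (stN_nonneg W hW' b))
      ⟨x, Finset.mem_univ x, ?_⟩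
    rw [stD, if_pos hx]
    exact mul_pos (hW _) (h x hx.1)
  induction hn : S.card generalizing S a with
  | zero =>
    have : a = 0 := by omega
    subst this
    simp [stN, hn, stNf]
  | succ n ih =>
    have hS : S.Nonempty := Finset.card_pos.1 (by omega)
    have hc : ∀ x ∈ S, (S.erase x).card = n := fun x hx => by
      rw [Finset.card_erase_of_mem hx]; omega
    cases a with
    | zero =>
      rw [stN_two W 0 S (by omega)]
      exact key _ _ _ hS fun x hx => ih 0 _ (by omega) (hc x hx)
    | succ a =>
      rw [stN_one]
      exact key _ _ _ hS fun x hx => ih a _ (by rw [hc x hx]; omega) (hc x hx)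

end

section
variable {X : Type} [Fintype X] [PartialOrder X] [DecidableEq X] (W : X × Bool → ℝ)

theorem st_limit (f g : ℝ → ℝ) (hf : Continuous f) (hg : Continuous g)
    (h : ∀ s, 0 < s → s < 1 → f s ≤ g s) : f 0 ≤ g 0 := by
  have h1 : Filter.Tendsto f (nhdsWithin 0 (Set.Ioi 0)) (nhds (f 0)) :=
    hf.continuousAt.tendsto.mono_left nhdsWithin_le_nhds
  have h2 : Filter.Tendsto g (nhdsWithin 0 (Set.Ioi 0)) (nhds (g 0)) :=
    hg.continuousAt.tendsto.mono_left nhdsWithin_le_nhds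
  refine le_of_tendsto_of_tendsto h1 h2 ?_
  filter_upwards [Ioo_mem_nhdsGT (show (0 : ℝ) < 1 by norm_num)] with s hs
  exact h s hs.1 hs.2

theorem stD_smul (i : X × Bool) (φ : Finset X → ℝ) (c : ℝ) (S : Finset X) :
    stD W i (fun S' => φ S' * c) S = stD W i φ S * c := by
  unfold stD
  split_ifs
  · ring
  · simp

/-- The quadratic form of Stanley's inequality. -/
noncomputable def stForm (a : ℕ) (S : Finset X) (v w : X × Bool → ℝ) : ℝ :=
  stB stR (fun i j => stD W i (stD W j (stN W a)) S) v w

/-- Vector with value `s` on bottom letters and `t` on top letters. -/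
def stH (s t : ℝ) (i : X × Bool) : ℝ := if i.2 = true then s else t

theorem stH_compat (s t : ℝ) (i j : X × Bool) (h : stR i j) : stH s t i = stH s t j := by
  unfold stH; rw [h.1]

theorem stN_h (s t : ℝ) (a : ℕ) (S : Finset X) (ha : a < S.card) :
    ∑ l, stD W l (stN W a) S * stH s t l = s * stN W (a + 1) S + t * stN W a S := by
  rw [Fintype.sum_prod_type, stN_one, stN_two W a S ha, Finset.mul_sum, Finset.mul_sum,
    ← Finset.sum_add_distrib]
  refine Finset.sum_congr rfl fun x _ => ?_
  simp [stH]; ring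

theorem stB_lin {ι : Type} [Fintype ι] (r : ι → ι → Prop) (m m' : ι → ι → ℝ) (s t : ℝ)
    (v w : ι → ℝ) :
    stB r (fun i j => s * m i j + t * m' i j) v w = s * stB r m v w + t * stB r m' v w := by
  unfold stB
  simp only [Finset.mul_sum, ← Finset.sum_add_distrib]
  exact Finset.sum_congr rfl fun i _ => Finset.sum_congr rfl fun j _ => by ring

theorem st_step_concrete (hW : ∀ i, 0 < W i) (a : ℕ) (S : Finset X) (ha : a + 3 ≤ S.card)
    (ih : ∀ x ∈ S, ∀ v w, (∀ i, 0 ≤ w i) →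
      stForm W a (S.erase x) v v * stForm W a (S.erase x) w w ≤ stForm W a (S.erase x) v w ^ 2)
    (s t : ℝ) (hs : 0 < s) (ht : 0 < t) (v w : X × Bool → ℝ) (hw : ∀ i, 0 ≤ w i) :
    (s * stForm W (a + 1) S v v + t * stForm W a S v v) *
      (s * stForm W (a + 1) S w w + t * stForm W a S w w) ≤
    (s * stForm W (a + 1) S v w + t * stForm W a S v w) ^ 2 := by
  have hW' := fun i => (hW i).le
  have hpos : ∀ i : X × Bool, 0 < stH s t i := by
    intro i; unfold stH; split_ifs <;> assumption
  simp only [stForm, ← stB_lin]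
  have hmform : ∀ i j : X × Bool, s * stD W i (stD W j (stN W (a + 1))) S +
      t * stD W i (stD W j (stN W a)) S =
      stD W i (stD W j (fun S' => s * stN W (a + 1) S' + t * stN W a S')) S := by
    intro i j
    rw [← stD_lin]
    exact stD_congr W _ _ _ _ fun _ => (stD_lin W _ _ _ _ _ _).symm
  have hmpos : ∀ i j : X × Bool, stExt S i → stExt (S.erase i.1) j →
      s * stD W i (stD W j (stN W (a + 1))) S + t * stD W i (stD W j (stN W a)) S ≠ 0 := by
    intro i j h1 h2
    rw [hmform, stD, if_pos h1, stD, if_pos h2]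
    have hc : ((S.erase i.1).erase j.1).card = S.card - 2 := by
      rw [Finset.card_erase_of_mem h2.1, Finset.card_erase_of_mem h1.1]; omega
    have p1 := stN_pos W hW (a + 1) ((S.erase i.1).erase j.1) (by omega)
    have p2 := stN_pos W hW a ((S.erase i.1).erase j.1) (by omega)
    have := hW i
    have := hW j
    positivity
  refine st_step stR stR_irr stR_trans (stH s t) hpos (stH_compat s t)
    (fun i j l => stD W i (stD W j (stD W l (stN W a))) S) ?_ ?_ ?_ ?_ ?_ ?_ _ ?_ ?_ ?_ v w hw
  · intro i j l
    exact stD_nonneg W hW' _ _ _ fun S => stD_nonneg W hW' _ _ _ fun S =>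
      stD_nonneg W hW' _ _ _ fun S => stN_nonneg W hW' _ _
  · intro i j l h1 h2
    exact stD_comm W _ _ h1 h2 _ _
  · intro i j l h1 h2
    exact stD_congr W _ _ _ _ fun _ => stD_comm W _ _ h1 h2 _ _
  · intro i j l h1
    exact stD_zero W _ _ h1 _ _
  · intro i j l h1
    rw [stD_congr W i _ (fun _ => 0) S fun _ => stD_zero W _ _ h1 _ _]
    simp [stD]
  · intro i j l h1
    exact stD_zero' W _ _ _ h1 _ _
  · intro i j
    rw [hmform]
    have e : ∀ l, stD W i (stD W j (stD W l (stN W a))) S * stH s t l =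
        stD W i (fun S' => stD W j (fun S'' => stD W l (stN W a) S'' * stH s t l) S') S := by
      intro l
      simp only [stD_smul]
    simp_rw [e]
    rw [← stD_sum]
    refine stD_congr W _ _ _ _ fun h1 => ?_
    rw [← stD_sum]
    refine stD_congr W _ _ _ _ fun h2 => ?_
    rw [stN_h]
    rw [Finset.card_erase_of_mem h2.1, Finset.card_erase_of_mem h1.1]; omega
  · intro i v
    by_cases h1 : stExt S i
    · have e : ∀ v w, stB stR (fun j l => stD W i (stD W j (stD W l (stN W a))) S) v w =
          W i * stForm W a (S.erase i.1) v w := by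
        intro v w
        unfold stForm stB
        simp only [Finset.mul_sum]
        refine Finset.sum_congr rfl fun j _ => Finset.sum_congr rfl fun l _ => ?_
        rw [stD, if_pos h1]; ring
      rw [e, e, e]
      have := ih i.1 h1.1 v (stH s t) fun i => (hpos i).le
      have := mul_le_mul_of_nonneg_left this (sq_nonneg (W i))
      linarith
    · have e : ∀ v w, stB stR (fun j l => stD W i (stD W j (stD W l (stN W a))) S) v w = 0 := by
        intro v w
        unfold stB
        refine Finset.sum_eq_zero fun j _ => Finset.sum_eq_zero fun l _ => ?_
        beta_reduce
        rw [stD, if_neg h1]; ring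
      rw [e, e, e]; simp
  · intro ρ hρ i j hi hj
    have aux : ∀ i : X × Bool, (∃ l, s * stD W i (stD W l (stN W (a + 1))) S +
        t * stD W i (stD W l (stN W a)) S ≠ 0) → stExt S i := by
      rintro i ⟨l, hl⟩
      by_contra hcon
      apply hl
      simp [stD, hcon]
    have hi := aux i hi
    have hj := aux j hj
    have main : ∀ i j : X × Bool, stExt S i → stExt S j → i.1 ≠ j.1 → ρ i = ρ j := by
      intro i j hi hj hne
      refine hρ i j ?_ (hmpos i j hi ⟨Finset.mem_erase.2 ⟨Ne.symm hne, hj.1⟩, fun y hy =>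
        hj.2 y (Finset.mem_of_mem_erase hy)⟩)
      intro hr
      apply hj.2 i.1 hi.1
      rw [← hr.1]; exact hr
    by_cases hne : i.1 = j.1
    · by_cases hσ : i.2 = j.2
      · rw [Prod.ext hne hσ]
      · obtain ⟨x, σ⟩ := i
        obtain ⟨y, τ⟩ := j
        simp only at hne hσ
        subst hne
        have hne : (S.erase x).Nonempty := Finset.card_pos.1 (by
          rw [Finset.card_erase_of_mem hi.1]; omega)
        obtain ⟨u, hu⟩ := stExt_exists (S.erase x) hne σ
        have hux : u ≠ x := Finset.ne_of_mem_erase hu.1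
        have huS := Finset.mem_of_mem_erase hu.1
        have hk : stExt S (u, σ) := by
          refine ⟨huS, fun y hy => ?_⟩
          by_cases hyx : y = x
          · subst hyx
            intro h3
            exact hj.2 u huS ((stR_flip y u σ τ hσ).1 h3)
          · exact hu.2 y (Finset.mem_erase.2 ⟨hyx, hy⟩)
        rw [main (x, σ) (u, σ) hi hk (Ne.symm hux), main (u, σ) (x, τ) hk hj hux]
    · exact main i j hi hj hne

theorem st_base_m (x y : X) (hxy : x ≠ y) (σ τ : Bool) :
    stD W (x, σ) (stD W (y, τ) (stN W 0)) {x, y} =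
      open Classical in if stR (y, σ) (x, σ) then 0 else W (x, σ) * W (y, τ) := by
  have he : ({x, y} : Finset X).erase x = {y} := by
    rw [Finset.erase_insert]; simpa using hxy
  have h1 : stExt ({x, y} : Finset X) (x, σ) ↔ ¬ stR (y, σ) (x, σ) := by
    unfold stExt; simp [stR_irr]
  have h2 : stExt ({y} : Finset X) (y, τ) := by
    unfold stExt; simp [stR_irr]
  by_cases h3 : stR (y, σ) (x, σ)
  · rw [stD, if_neg (by rw [h1]; simpa using h3), if_pos h3]
  · rw [stD, if_pos (h1.2 h3), if_neg h3]
    change W (x, σ) * stD W (y, τ) (stN W 0) (({x, y} : Finset X).erase x) = _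
    rw [he, stD, if_pos h2]
    simp [stN, stNf]

theorem st_base_form (x y : X) (hxy : x ≠ y) (v w : X × Bool → ℝ) :
    stForm W 0 {x, y} v w = ∑ σ : Bool, ∑ τ : Bool,
      ((open Classical in if stR (y, σ) (x, σ) then 0 else W (x, σ) * W (y, τ)) *
        (v (x, σ) * stT stR (x, σ) w (y, τ)) +
      (open Classical in if stR (x, σ) (y, σ) then 0 else W (y, σ) * W (x, τ)) *
        (v (y, σ) * stT stR (y, σ) w (x, τ))) := by
  have red : ∀ F : X × Bool → ℝ, (∀ i, i.1 ∉ ({x, y} : Finset X) → F i = 0) →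
      ∑ i, F i = ∑ σ, (F (x, σ) + F (y, σ)) := by
    intro F hF
    rw [Fintype.sum_prod_type, ← Finset.sum_subset (Finset.subset_univ {x, y}), Finset.sum_pair hxy,
      Finset.sum_add_distrib]
    intro u _ hu
    exact Finset.sum_eq_zero fun τ _ => hF _ hu
  have hs : ∀ (u : X) (σ τ : Bool), stD W (u, σ) (stD W (u, τ) (stN W 0)) {x, y} = 0 := by
    intro u σ τ
    rw [stD_congr W _ _ (fun _ => 0) _ fun _ => stD_out W _ _ _ (by simp)]
    simp [stD]
  unfold stForm stB
  rw [red]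
  · refine Finset.sum_congr rfl fun σ _ => ?_
    rw [red, red, ← Finset.sum_add_distrib]
    · refine Finset.sum_congr rfl fun τ _ => ?_
      beta_reduce
      rw [hs, hs, st_base_m W x y hxy, Finset.pair_comm, st_base_m W y x (Ne.symm hxy)]
      ring
    · intro j hj
      beta_reduce
      rw [stD_congr W _ _ (fun _ => 0) _ fun _ => stD_out W _ _ _
        (fun h => hj (Finset.mem_of_mem_erase h))]
      simp [stD]
    · intro j hj
      beta_reduce
      rw [stD_congr W _ _ (fun _ => 0) _ fun _ => stD_out W _ _ _
        (fun h => hj (Finset.mem_of_mem_erase h))]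
      simp [stD]
  · intro i hi
    refine Finset.sum_eq_zero fun j _ => ?_
    beta_reduce
    rw [stD_out W _ _ _ hi]; ring

theorem st_base_lt (hW : ∀ i, 0 < W i) (hWd : ∀ x y : X, x < y → W (y, true) ≤ W (x, true))
    (hWu : ∀ x y : X, x < y → W (x, false) ≤ W (y, false)) (x y : X) (hxy : x < y)
    (v w : X × Bool → ℝ) :
    stForm W 0 {x, y} v v * stForm W 0 {x, y} w w ≤ stForm W 0 {x, y} v w ^ 2 := by
  rw [st_base_form W x y hxy.ne, st_base_form W x y hxy.ne, st_base_form W x y hxy.ne]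
  have n := hxy.not_gt
  simp only [Fintype.sum_bool, stT, stR, hxy, n, true_and, reduceCtorEq, false_and, or_false,
    false_or, if_true, if_false, zero_mul, add_zero, zero_add]
  have h1 := hWd x y hxy
  have h2 := hWu x y hxy
  generalize hA : W (x, true) = A at *
  generalize hB : W (y, true) = B at *
  generalize hC : W (x, false) = C at *
  generalize hD : W (y, false) = D at *
  have pA : 0 < A := hA ▸ hW _
  have pB : 0 < B := hB ▸ hW _
  have pC : 0 < C := hC ▸ hW _
  have pD : 0 < D := hD ▸ hW _
  have h3 : B * C ≤ A * D := mul_le_mul h1 h2 pC.le pA.le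
  have h4 : 0 ≤ A * D * (A * D - B * C) *
      (v (x, true) * w (y, false) - v (y, false) * w (x, true)) ^ 2 :=
    mul_nonneg (mul_nonneg (mul_pos pA pD).le (sub_nonneg.2 h3)) (sq_nonneg _)
  rw [← sub_nonneg]
  refine h4.trans (le_of_eq ?_)
  ring

theorem st_base (hW : ∀ i, 0 < W i) (hWd : ∀ x y : X, x < y → W (y, true) ≤ W (x, true))
    (hWu : ∀ x y : X, x < y → W (x, false) ≤ W (y, false)) (S : Finset X) (hS : S.card = 2)
    (v w : X × Bool → ℝ) :
    stForm W 0 S v v * stForm W 0 S w w ≤ stForm W 0 S v w ^ 2 := by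
  obtain ⟨x, y, hxy, rfl⟩ := Finset.card_eq_two.1 hS
  by_cases h1 : x < y
  · exact st_base_lt W hW hWd hWu x y h1 v w
  by_cases h2 : y < x
  · rw [Finset.pair_comm]
    exact st_base_lt W hW hWd hWu y x h2 v w
  rw [st_base_form W x y hxy, st_base_form W x y hxy, st_base_form W x y hxy]
  simp only [Fintype.sum_bool, stT, stR, h1, h2, or_false,
    and_false, if_false]
  rw [← sub_nonneg]
  refine (sq_nonneg ((W (x, true) * v (x, true) + W (x, false) * v (x, false)) *
    (W (y, true) * w (y, true) + W (y, false) * w (y, false)) -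
    (W (y, true) * v (y, true) + W (y, false) * v (y, false)) *
    (W (x, true) * w (x, true) + W (x, false) * w (x, false)))).trans (le_of_eq ?_)
  ring

theorem st_hyp (hW : ∀ i, 0 < W i) (hWd : ∀ x y : X, x < y → W (y, true) ≤ W (x, true))
    (hWu : ∀ x y : X, x < y → W (x, false) ≤ W (y, false)) (n : ℕ) :
    ∀ (S : Finset X) (a : ℕ), S.card = n + 2 → a ≤ n → ∀ v w, (∀ i, 0 ≤ w i) →
    stForm W a S v v * stForm W a S w w ≤ stForm W a S v w ^ 2 := by
  induction n with
  | zero =>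
    intro S a hS ha v w _
    obtain rfl : a = 0 := by omega
    exact st_base W hW hWd hWu S hS v w
  | succ n ih =>
    intro S a hS ha v w hw
    have step := fun (b : ℕ) (hb : b ≤ n) => st_step_concrete W hW b S (by omega) (fun x hx =>
      ih (S.erase x) b (by rw [Finset.card_erase_of_mem hx]; omega) hb)
    rcases Nat.lt_or_ge n a with h | h
    · obtain ⟨b, rfl⟩ : ∃ b, a = b + 1 := ⟨a - 1, by omega⟩
      have := st_limit
        (fun t => (1 * stForm W (b + 1) S v v + t * stForm W b S v v) *
          (1 * stForm W (b + 1) S w w + t * stForm W b S w w))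
        (fun t => (1 * stForm W (b + 1) S v w + t * stForm W b S v w) ^ 2)
        (by fun_prop) (by fun_prop)
        (fun t ht _ => step b (by omega) 1 t one_pos ht v w hw)
      simpa using this
    · have := st_limit
        (fun s => (s * stForm W (a + 1) S v v + 1 * stForm W a S v v) *
          (s * stForm W (a + 1) S w w + 1 * stForm W a S w w))
        (fun s => (s * stForm W (a + 1) S v w + 1 * stForm W a S v w) ^ 2)
        (by fun_prop) (by fun_prop)
        (fun s hs _ => step a h s 1 hs one_pos v w hw)
      simpa using this

theorem st_form_h (a : ℕ) (S : Finset X) (ha : a + 2 ≤ S.card) (s t s' t' : ℝ) :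
    stForm W a S (stH s t) (stH s' t') =
      s * s' * stN W (a + 2) S + (s * t' + t * s') * stN W (a + 1) S + t * t' * stN W a S := by
  unfold stForm stB
  simp only [stT_h stR (stH s' t') (stH_compat s' t')]
  have e : ∀ i : X × Bool, ∑ j, stD W i (stD W j (stN W a)) S * (stH s t i * stH s' t' j) =
      s' * (stD W i (stN W (a + 1)) S * stH s t i) + t' * (stD W i (stN W a) S * stH s t i) := by
    intro i
    have e1 : ∀ j, stD W i (stD W j (stN W a)) S * (stH s t i * stH s' t' j) =
        stD W i (fun S' => stD W j (stN W a) S' * stH s' t' j) S * stH s t i := by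
      intro j
      rw [stD_smul]; ring
    simp_rw [e1]
    rw [← Finset.sum_mul, ← stD_sum, stD_congr W i _
      (fun S' => s' * stN W (a + 1) S' + t' * stN W a S') S, stD_lin]
    · ring
    · intro h
      rw [stN_h]
      rw [Finset.card_erase_of_mem h.1]; omega
  simp_rw [e]
  rw [Finset.sum_add_distrib, ← Finset.mul_sum, ← Finset.mul_sum, stN_h W s t (a + 1) S (by omega),
    stN_h W s t a S (by omega)]
  ring

theorem st_main (hW : ∀ i, 0 < W i) (hWd : ∀ x y : X, x < y → W (y, true) ≤ W (x, true))
    (hWu : ∀ x y : X, x < y → W (x, false) ≤ W (y, false)) (a : ℕ) (S : Finset X)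
    (ha : a + 2 ≤ S.card) : stN W a S * stN W (a + 2) S ≤ stN W (a + 1) S ^ 2 := by
  have := st_hyp W hW hWd hWu (S.card - 2) S a (by omega) (by omega) (stH 0 1) (stH 1 0)
    (fun i => by unfold stH; split_ifs <;> norm_num)
  rw [st_form_h W a S ha, st_form_h W a S ha, st_form_h W a S ha] at this
  simpa using this

theorem stN_cont (V : ℝ → X × Bool → ℝ) (hV : ∀ i, Continuous fun e => V e i) (a : ℕ)
    (S : Finset X) : Continuous fun e => stN (V e) a S := by
  have : ∀ n S a, Continuous fun e => stNf (V e) n S a := by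
    intro n
    induction n with
    | zero => intro S a; unfold stNf; exact continuous_const
    | succ n ih =>
      intro S a
      have key : ∀ i b, Continuous fun e => stD (V e) i (fun S' => stNf (V e) n S' b) S := by
        intro i b
        unfold stD
        split_ifs
        · exact (hV i).mul (ih _ _)
        · exact continuous_const
      cases a with
      | zero => unfold stNf; exact continuous_finsetSum _ fun x _ => key _ _
      | succ a => unfold stNf; exact continuous_finsetSum _ fun x _ => key _ _
  exact this _ _ _

/-- Weights which penalise letters on the wrong side of `z`. -/
noncomputable def stV (z : X) (e : ℝ) (i : X × Bool) : ℝ :=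
  open Classical in if stR (z, i.2) i then e else 1

theorem st_main_zero (z : X) (a : ℕ) (S : Finset X) (ha : a + 2 ≤ S.card) :
    stN (stV z 0) a S * stN (stV z 0) (a + 2) S ≤ stN (stV z 0) (a + 1) S ^ 2 := by
  have hc : ∀ i, Continuous fun e => stV z e i := by
    intro i
    unfold stV
    split_ifs
    · exact continuous_id
    · exact continuous_const
  refine st_limit (fun e => stN (stV z e) a S * stN (stV z e) (a + 2) S)
    (fun e => stN (stV z e) (a + 1) S ^ 2)
    ((stN_cont _ hc a S).mul (stN_cont _ hc _ S)) ((stN_cont _ hc _ S).pow 2) ?_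
  intro e he he1
  refine st_main _ ?_ ?_ ?_ a S ha
  · intro i; unfold stV; split_ifs
    · exact he
    · exact one_pos
  · intro x y hxy
    unfold stV
    simp only
    split_ifs with h1 h2 h2
    · exact le_rfl
    · exact he1.le
    · exact (h1 (stR_trans _ _ _ h2 ⟨rfl, Or.inl ⟨rfl, hxy⟩⟩)).elim
    · exact le_rfl
  · intro x y hxy
    unfold stV
    simp only
    split_ifs with h1 h2 h2
    · exact le_rfl
    · exact he1.le
    · exact (h1 (stR_trans _ _ _ h2 ⟨rfl, Or.inr ⟨rfl, hxy⟩⟩)).elim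
    · exact le_rfl

end

section
variable {X : Type} [Fintype X] [PartialOrder X] [DecidableEq X]

theorem stR_true (u x : X) : stR (u, true) (x, true) ↔ u < x := by simp [stR]

theorem stR_false (u x : X) : stR (u, false) (x, false) ↔ x < u := by simp [stR]

/-- The letter `(x, σ)` can be removed from `S ∪ {z}` and is different from `z`. -/
def stGood (z : X) (S : Finset X) (σ : Bool) (x : X) : Prop :=
  stExt S (x, σ) ∧ ¬ stR (z, σ) (x, σ)

/-- Lists representing linear extensions of `S ∪ {z}` with `z` in position `a`. -/
noncomputable def stQ (z : X) : ℕ → Finset X → ℕ → Finset (List X)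
  | 0, _, a => if a = 0 then {[z]} else ∅
  | n + 1, S, 0 => open Classical in (Finset.univ.filter (stGood z S false)).biUnion fun y =>
      (stQ z n (S.erase y) 0).image (fun l => l ++ [y])
  | n + 1, S, a + 1 => open Classical in (Finset.univ.filter (stGood z S true)).biUnion fun x =>
      (stQ z n (S.erase x) a).image (fun l => x :: l)

theorem stD_stV (z : X) (σ : Bool) (x : X) (φ : Finset X → ℝ) (S : Finset X) :
    stD (stV z 0) (x, σ) φ S =
      open Classical in if stGood z S σ x then φ (S.erase x) else 0 := by
  unfold stD stV stGood
  by_cases h1 : stExt S (x, σ) <;> by_cases h2 : stR (z, σ) (x, σ) <;> simp [h1, h2]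

theorem stQ_card (z : X) (n : ℕ) : ∀ (S : Finset X) (a : ℕ),
    ((stQ z n S a).card : ℝ) = stNf (stV z 0) n S a := by
  induction n with
  | zero =>
    intro S a
    unfold stQ stNf
    split_ifs <;> simp
  | succ n ih =>
    intro S a
    cases a with
    | zero =>
      unfold stQ stNf
      rw [Finset.card_biUnion]
      · simp only [stD_stV]
        rw [← Finset.sum_filter, Nat.cast_sum]
        refine Finset.sum_congr rfl fun x _ => ?_
        rw [Finset.card_image_of_injective _ (List.append_left_injective [x]), ih]
      · intro x _ y _ hxy
        rw [Function.onFun, Finset.disjoint_left]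
        intro l h1 h2
        obtain ⟨l1, -, rfl⟩ := Finset.mem_image.1 h1
        obtain ⟨l2, -, h3⟩ := Finset.mem_image.1 h2
        have := List.append_inj_right' h3 rfl
        simp at this
        exact hxy this.symm
    | succ a =>
      unfold stQ stNf
      rw [Finset.card_biUnion]
      · simp only [stD_stV]
        rw [← Finset.sum_filter, Nat.cast_sum]
        refine Finset.sum_congr rfl fun x _ => ?_
        rw [Finset.card_image_of_injective _ List.cons_injective, ih]
      · intro x _ y _ hxy
        rw [Function.onFun, Finset.disjoint_left]
        intro l h1 h2
        obtain ⟨l1, -, rfl⟩ := Finset.mem_image.1 h1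
        obtain ⟨l2, -, h3⟩ := Finset.mem_image.1 h2
        simp at h3
        exact hxy h3.1.symm

/-- The list `l` is a linear extension of `S ∪ {z}` with `z` in position `a`. -/
def stLin (z : X) (S : Finset X) (a : ℕ) (l : List X) : Prop :=
  l.Nodup ∧ l.Pairwise (fun u v => ¬ v < u) ∧ (∀ u, u ∈ l ↔ u = z ∨ u ∈ S) ∧ l[a]? = some z

theorem stQ_mem (z : X) (n : ℕ) : ∀ (S : Finset X) (a : ℕ) (l : List X), z ∉ S → S.card = n →
    (l ∈ stQ z n S a ↔ stLin z S a l) := by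
  induction n with
  | zero =>
    intro S a l hz hS
    obtain rfl := Finset.card_eq_zero.1 hS
    unfold stQ stLin
    constructor
    · split_ifs with h
      · intro h1
        obtain rfl := Finset.mem_singleton.1 h1
        subst h
        simp
      · simp
    · rintro ⟨h1, -, h3, h4⟩
      have hl : l = [z] := by
        match l, h1, h3, h4 with
        | [], _, _, h4 => simp at h4
        | [u], _, h3, _ => simpa using (h3 u).1 (by simp)
        | u :: v :: l, h1, h3, _ =>
          have e1 := (h3 u).1 (by simp)
          have e2 := (h3 v).1 (by simp)
          simp at e1 e2
          subst e1 e2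
          simp at h1
      subst hl
      have : a = 0 := by
        by_contra hne
        obtain ⟨b, rfl⟩ := Nat.exists_eq_succ_of_ne_zero hne
        simp at h4
      simp [this]
  | succ n ih =>
    intro S a l hz hS
    cases a with
    | zero =>
      unfold stQ
      simp only [Finset.mem_biUnion, Finset.mem_filter, Finset.mem_univ, true_and,
        Finset.mem_image]
      constructor
      · rintro ⟨y, ⟨⟨hy, hy2⟩, hy3⟩, l', hl', rfl⟩
        have hy' : y ∈ S := hy
        simp only [stR_false] at hy2 hy3
        rw [ih _ _ _ (fun h => hz (Finset.mem_of_mem_erase h))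
          (by rw [Finset.card_erase_of_mem hy']; omega)] at hl'
        obtain ⟨h1, h2, h3, h4⟩ := hl'
        have hyz : y ≠ z := fun h => hz (h ▸ hy')
        have hyl : y ∉ l' := by rw [h3]; simp [hyz]
        refine ⟨?_, ?_, ?_, ?_⟩
        · rw [List.nodup_append]
          refine ⟨h1, by simp, ?_⟩
          intro u hu v hv
          obtain rfl := List.mem_singleton.1 hv
          rintro rfl
          exact hyl hu
        · rw [List.pairwise_append]
          refine ⟨h2, by simp, ?_⟩
          intro u hu v hv
          obtain rfl := List.mem_singleton.1 hv
          rcases (h3 u).1 hu with rfl | hu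
          · exact hy3
          · exact hy2 u (Finset.mem_of_mem_erase hu)
        · intro u
          rw [List.mem_append, h3, List.mem_singleton, Finset.mem_erase]
          by_cases huy : u = y
          · simp [huy, hy']
          · simp [huy]
        · have : 0 < l'.length := by
            by_contra hne
            simp at hne
            simp [hne] at h4
          rw [List.getElem?_append_left this, h4]
      · rintro ⟨h1, h2, h3, h4⟩
        rcases List.eq_nil_or_concat l with rfl | ⟨l', y, rfl⟩
        · simp at h4
        rw [List.concat_eq_append] at h1 h2 h4 ⊢
        simp only [List.concat_eq_append] at h3
        have hne : l' ≠ [] := by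
          rintro rfl
          simp at h4 h3
          obtain ⟨u, hu⟩ := Finset.card_pos.1 (by omega : 0 < S.card)
          have := (h3 u).2 (Or.inr hu)
          rw [this, h4] at hu
          exact hz hu
        have hpos : 0 < l'.length := List.length_pos_iff.2 hne
        rw [List.getElem?_append_left hpos] at h4
        have hzl : z ∈ l' := List.mem_of_getElem? h4
        rw [List.nodup_append] at h1
        rw [List.pairwise_append] at h2
        have hyl : y ∉ l' := fun h => h1.2.2 y h y (by simp) rfl
        have hyz : y ≠ z := by rintro rfl; exact hyl hzl
        have hyS : y ∈ S := ((h3 y).1 (by simp)).resolve_left hyz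
        have hlt : ∀ u ∈ l', ¬ y < u := fun u hu => h2.2.2 u hu y (by simp)
        refine ⟨y, ⟨⟨hyS, ?_⟩, ?_⟩, l', ?_, rfl⟩
        · intro u hu
          rw [stR_false]
          by_cases huy : u = y
          · rw [huy]; exact lt_irrefl _
          · refine hlt u ?_
            have := (h3 u).2 (Or.inr hu)
            simpa [huy] using this
        · rw [stR_false]
          exact hlt z hzl
        · rw [ih _ _ _ (fun h => hz (Finset.mem_of_mem_erase h))
            (by rw [Finset.card_erase_of_mem hyS]; omega)]
          refine ⟨h1.1, h2.1, ?_, h4⟩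
          intro u
          have := h3 u
          rw [List.mem_append, List.mem_singleton] at this
          rw [Finset.mem_erase]
          by_cases huy : u = y
          · subst huy; simp [hyl, hyz]
          · simpa [huy] using this
    | succ a =>
      unfold stQ
      simp only [Finset.mem_biUnion, Finset.mem_filter, Finset.mem_univ, true_and,
        Finset.mem_image]
      constructor
      · rintro ⟨y, ⟨⟨hy, hy2⟩, hy3⟩, l', hl', rfl⟩
        have hy' : y ∈ S := hy
        simp only [stR_true] at hy2 hy3
        rw [ih _ _ _ (fun h => hz (Finset.mem_of_mem_erase h))
          (by rw [Finset.card_erase_of_mem hy']; omega)] at hl'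
        obtain ⟨h1, h2, h3, h4⟩ := hl'
        have hyz : y ≠ z := fun h => hz (h ▸ hy')
        have hyl : y ∉ l' := by rw [h3]; simp [hyz]
        refine ⟨List.nodup_cons.2 ⟨hyl, h1⟩, List.pairwise_cons.2 ⟨?_, h2⟩, ?_, by simpa using h4⟩
        · intro u hu
          rcases (h3 u).1 hu with rfl | hu
          · exact hy3
          · exact hy2 u (Finset.mem_of_mem_erase hu)
        · intro u
          rw [List.mem_cons, h3, Finset.mem_erase]
          by_cases huy : u = y
          · simp [huy, hy']
          · simp [huy]
      · rintro ⟨h1, h2, h3, h4⟩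
        rcases l with _ | ⟨y, l'⟩
        · simp at h4
        rw [List.getElem?_cons_succ] at h4
        have hzl : z ∈ l' := List.mem_of_getElem? h4
        rw [List.nodup_cons] at h1
        rw [List.pairwise_cons] at h2
        have hyl : y ∉ l' := h1.1
        have hyz : y ≠ z := by rintro rfl; exact hyl hzl
        have hyS : y ∈ S := ((h3 y).1 (by simp)).resolve_left hyz
        have hlt : ∀ u ∈ l', ¬ u < y := h2.1
        refine ⟨y, ⟨⟨hyS, ?_⟩, ?_⟩, l', ?_, rfl⟩
        · intro u hu
          rw [stR_true]
          by_cases huy : u = y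
          · rw [huy]; exact lt_irrefl _
          · refine hlt u ?_
            have := (h3 u).2 (Or.inr hu)
            simpa [huy] using this
        · rw [stR_true]
          exact hlt z hzl
        · rw [ih _ _ _ (fun h => hz (Finset.mem_of_mem_erase h))
            (by rw [Finset.card_erase_of_mem hyS]; omega)]
          refine ⟨h1.2, h2.2, ?_, h4⟩
          intro u
          have := h3 u
          rw [List.mem_cons] at this
          rw [Finset.mem_erase]
          by_cases huy : u = y
          · subst huy; simp [hyl, hyz]
          · simpa [huy] using this

theorem st_count (z : X) (a : ℕ) :
    (Nat.card {ρ : X ≃ Fin (Fintype.card X) //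
      (∀ u v : X, u < v → ρ u < ρ v) ∧ (ρ z).val + 1 = a + 1} : ℝ) =
      stN (stV z 0) a (Finset.univ.erase z) := by
  unfold stN
  rw [← stQ_card, ← Nat.card_eq_finsetCard]
  norm_cast
  have hmem := fun l => stQ_mem z _ (Finset.univ.erase z) a l (by simp) rfl
  have hp : ∀ ρ : {ρ : X ≃ Fin (Fintype.card X) //
      (∀ u v : X, u < v → ρ u < ρ v) ∧ (ρ z).val + 1 = a + 1},
      List.ofFn ρ.1.symm ∈ stQ z (Finset.univ.erase z).card (Finset.univ.erase z) a := by
    rintro ⟨ρ, h1, h2⟩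
    rw [hmem]
    refine ⟨List.nodup_ofFn.2 ρ.symm.injective, ?_, ?_, ?_⟩
    · rw [List.pairwise_ofFn]
      intro i j hij hlt
      have := h1 _ _ hlt
      simp only [Equiv.apply_symm_apply] at this
      exact lt_asymm hij this
    · intro u
      simp only [List.mem_ofFn, Finset.mem_erase, Finset.mem_univ, and_true]
      exact ⟨fun _ => em _, fun _ => ⟨ρ u, by simp⟩⟩
    · have : a = (ρ z).val := by simp at h2; omega
      subst this
      simp
  refine Nat.card_congr (Equiv.ofBijective (fun ρ => ⟨_, hp ρ⟩) ⟨?_, ?_⟩)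
  · intro ρ ρ' h
    have h := List.ofFn_injective (congrArg Subtype.val h)
    apply Subtype.ext
    have : ρ.1.symm = ρ'.1.symm := DFunLike.coe_injective h
    rw [← Equiv.symm_symm ρ.1, this, Equiv.symm_symm]
  · rintro ⟨l, hl⟩
    obtain ⟨h1, h2, h3, h4⟩ := (hmem l).1 hl
    have hall : ∀ u, u ∈ l := fun u => (h3 u).2 (by simp [em])
    have hlen : l.length = Fintype.card X := by
      rw [← Fintype.card_fin l.length]
      exact Fintype.card_congr (List.Nodup.getEquivOfForallMemList l h1 hall)
    let f : Fin (Fintype.card X) ≃ X :=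
      (finCongr hlen.symm).trans (List.Nodup.getEquivOfForallMemList l h1 hall)
    have hf : ∀ i, f i = l.get (finCongr hlen.symm i) := fun i => rfl
    rw [List.pairwise_iff_get] at h2
    refine ⟨⟨f.symm, ?_, ?_⟩, ?_⟩
    · intro u v huv
      by_contra hcon
      have hne : f.symm v ≠ f.symm u := fun h => huv.ne' (f.symm.injective h)
      have hlt := lt_of_le_of_ne (not_lt.1 hcon) hne
      have := h2 (finCongr hlen.symm (f.symm v)) (finCongr hlen.symm (f.symm u)) hlt
      rw [← hf, ← hf, Equiv.apply_symm_apply, Equiv.apply_symm_apply] at this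
      exact this huv
    · obtain ⟨ha, h5⟩ := List.getElem?_eq_some_iff.1 h4
      have : f ⟨a, hlen ▸ ha⟩ = z := by rw [hf, ← h5]; rfl
      rw [← this, Equiv.symm_apply_apply]
    · apply Subtype.ext
      simp only [Equiv.symm_symm]
      refine List.ext_getElem (by simp [hlen]) ?_
      intro i hi hi'
      rw [List.getElem_ofFn, hf]
      rfl

end

/-- Stanley's inequality: for a finite poset on `n` elements, an element `x`,
and `1 < k < n`, the number `N(k)` of linear extensions `ρ` with `ρ(x) = k`
(in 1-based indexing) satisfies `N(k)^2 ≥ N(k-1) * N(k+1)`. -/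
theorem stanley_log_concave (X : Type) [Fintype X] [PartialOrder X] (x : X) (k : ℕ)
    (hk1 : 1 < k) (hk2 : k < Fintype.card X) :
    Nat.card {ρ : X ≃ Fin (Fintype.card X) //
        (∀ a b : X, a < b → ρ a < ρ b) ∧ (ρ x).val + 1 = k - 1} *
      Nat.card {ρ : X ≃ Fin (Fintype.card X) //
        (∀ a b : X, a < b → ρ a < ρ b) ∧ (ρ x).val + 1 = k + 1} ≤
    (Nat.card {ρ : X ≃ Fin (Fintype.card X) //
        (∀ a b : X, a < b → ρ a < ρ b) ∧ (ρ x).val + 1 = k}) ^ 2 := by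
  classical
  obtain ⟨a, rfl⟩ : ∃ a, k = a + 2 := ⟨k - 2, by omega⟩
  have h := st_main_zero x a (Finset.univ.erase x) (by
    rw [Finset.card_erase_of_mem (Finset.mem_univ x), Finset.card_univ]; omega)
  rw [← st_count, ← st_count, ← st_count] at h
  exact_mod_cast h
end

section
/- The number of standard Young tableaux of shape λ ⊢ n equals n! divided by the product of the hook lengths of all cells of λ: f^λ = n!/∏_{(i,j)∈λ} h_λ(i,j). -/
/-- The number of standard Young tableaux of shape `μ`: bijective fillings of the
cells of `μ` by `0, …, n-1` that strictly increase along rows and columns. -/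
noncomputable def sytCard (μ : YoungDiagram) : ℕ :=
  Nat.card {T : {c : ℕ × ℕ // c ∈ μ} ≃ Fin μ.card //
    ∀ c d : {c : ℕ × ℕ // c ∈ μ},
      ((c.1.1 = d.1.1 ∧ c.1.2 < d.1.2) ∨ (c.1.2 = d.1.2 ∧ c.1.1 < d.1.1)) → T c < T d}

/-- Vandermonde product. -/
def hlfDelta (k : ℕ) (x : ℕ → ℚ) : ℚ :=
  ∏ j ∈ Finset.range k, ∏ i ∈ Finset.range j, (x i - x j)

theorem hlfDelta_succ (k : ℕ) (x : ℕ → ℚ) :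
    hlfDelta (k + 1) x = hlfDelta k x * ∏ i ∈ Finset.range k, (x i - x k) := by
  simp [hlfDelta, Finset.prod_range_succ]

theorem hlfDelta_congr (k : ℕ) (x y : ℕ → ℚ) (h : ∀ i < k, x i = y i) :
    hlfDelta k x = hlfDelta k y := by
  unfold hlfDelta
  refine Finset.prod_congr rfl fun j hj => Finset.prod_congr rfl fun i hi => ?_
  simp only [Finset.mem_range] at hi hj
  rw [h i (by omega), h j hj]

theorem hlfDelta_update (k : ℕ) (x : ℕ → ℚ) (y : ℚ) (i : ℕ) (hi : i < k) :
    hlfDelta k (Function.update x i y) * ∏ j ∈ (Finset.range k).erase i, (x i - x j)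
      = hlfDelta k x * ∏ j ∈ (Finset.range k).erase i, (y - x j) := by
  induction k with
  | zero => omega
  | succ k ih =>
    rw [hlfDelta_succ, hlfDelta_succ]
    by_cases hik : i = k
    · subst hik
      have h1 : (Finset.range (i + 1)).erase i = Finset.range i := by
        ext j; simp only [Finset.mem_erase, Finset.mem_range]; omega
      rw [h1, hlfDelta_congr i (Function.update x i y) x
        (fun j hj => Function.update_of_ne (by omega) _ _)]
      rw [mul_assoc, mul_assoc]
      congr 1
      rw [← Finset.prod_mul_distrib, ← Finset.prod_mul_distrib]
      refine Finset.prod_congr rfl fun j hj => ?_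
      have : j ≠ i := by simp only [Finset.mem_range] at hj; omega
      simp only [Function.update_self, Function.update_of_ne this]
      ring
    · have hik' : i < k := by omega
      have h1 : (Finset.range (k + 1)).erase i = insert k ((Finset.range k).erase i) := by
        ext j; simp only [Finset.mem_erase, Finset.mem_range, Finset.mem_insert]; omega
      rw [h1, Finset.prod_insert (by simp), Finset.prod_insert (by simp)]
      have hm : i ∈ Finset.range k := by simpa using hik'
      rw [← Finset.mul_prod_erase _ _ hm, ← Finset.mul_prod_erase _ (fun j => x j - x k) hm]
      have h2 : ∏ j ∈ (Finset.range k).erase i,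
          (Function.update x i y j - Function.update x i y k)
          = ∏ j ∈ (Finset.range k).erase i, (x j - x k) := by
        refine Finset.prod_congr rfl fun j hj => ?_
        rw [Function.update_of_ne (Finset.ne_of_mem_erase hj),
          Function.update_of_ne (Ne.symm hik)]
      rw [h2, Function.update_self, Function.update_of_ne (Ne.symm hik)]
      linear_combination (y - x k) * (x i - x k) *
        (∏ j ∈ (Finset.range k).erase i, (x j - x k)) * ih hik'

open Polynomial in
theorem hlf_poly (k : ℕ) (x : ℕ → ℚ) :
    let N := ∏ j ∈ Finset.range k, (X - C (x j))
    let P := ∏ j ∈ Finset.range k, (X - C (x j) - 1)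
    (X * P - (X - C (k : ℚ)) * N).degree < (k : WithBot ℕ) ∧
    ((X * P - (X - C (k : ℚ)) * N).coeff (k - 1)
      = ∑ j ∈ Finset.range k, ((j : ℚ) - x j)) := by
  induction k with
  | zero => simp
  | succ k ih =>
    intro N P
    set N' := ∏ j ∈ Finset.range k, (X - C (x j)) with hN'
    set P' := ∏ j ∈ Finset.range k, (X - C (x j) - 1) with hP'
    obtain ⟨h1, h2⟩ := ih
    have hN : N = N' * (X - C (x k)) := by simp only [N, hN', Finset.prod_range_succ]
    have hP : P = P' * (X - C (x k) - 1) := by simp only [P, hP', Finset.prod_range_succ]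
    set D := X * P' - (X - C (k : ℚ)) * N' with hD
    have key : X * P - (X - C ((k + 1 : ℕ) : ℚ)) * N
        = (X - C (x k + 1)) * D + C ((k : ℚ) - x k) * N' := by
      rw [hN, hP, hD]
      simp only [map_add, map_sub, Nat.cast_add, Nat.cast_one, C_1]
      ring
    have hNm : N'.Monic := monic_prod_of_monic _ _ fun j _ => monic_X_sub_C _
    have hNd : N'.natDegree = k := by
      rw [hN', natDegree_prod_of_monic _ _ fun j _ => monic_X_sub_C _]
      simp
    rw [key]
    have hDk : D.coeff k = 0 := coeff_eq_zero_of_degree_lt h1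
    have hNk : N'.coeff k = 1 := by rw [← hNd]; exact hNm
    constructor
    · rw [degree_lt_iff_coeff_zero]
      intro m hm
      rw [degree_lt_iff_coeff_zero] at h1
      obtain ⟨m, rfl⟩ : ∃ m', m = m' + 1 := ⟨m - 1, by omega⟩
      rw [coeff_add, sub_mul, coeff_sub, coeff_X_mul, coeff_C_mul, coeff_C_mul, h1 m (by omega),
        h1 (m+1) (by omega), coeff_eq_zero_of_natDegree_lt (p := N') (by omega)]
      simp
    · rw [Finset.sum_range_succ, Nat.add_sub_cancel, coeff_add, sub_mul, coeff_sub, coeff_C_mul,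
        coeff_C_mul, hDk, hNk, ← h2]
      rcases Nat.eq_zero_or_pos k with rfl | hk
      · have : D = 0 := by simpa using h1
        simp [this]
      · obtain ⟨m, rfl⟩ : ∃ m', k = m' + 1 := ⟨k - 1, by omega⟩
        rw [coeff_X_mul]; simp

open Polynomial in
theorem hlf_sum (k : ℕ) (x : ℕ → ℚ) (hx : Set.InjOn x (Finset.range k : Finset ℕ)) :
    ∑ i ∈ Finset.range k, x i * hlfDelta k (Function.update x i (x i - 1))
      = (∑ i ∈ Finset.range k, (x i - i)) * hlfDelta k x := by
  obtain ⟨h1, h2⟩ := hlf_poly k x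
  have h3 := Lagrange.coeff_eq_sum hx (by rw [Finset.card_range]; exact h1)
  rw [Finset.card_range, h2] at h3
  have h4 : ∑ i ∈ Finset.range k, (x i - i) = - ∑ i ∈ Finset.range k, ((i : ℚ) - x i) := by
    rw [← Finset.sum_neg_distrib]; simp
  rw [h4, h3, ← Finset.sum_neg_distrib, Finset.sum_mul]
  refine Finset.sum_congr rfl fun i hi => ?_
  have hne : ∏ j ∈ (Finset.range k).erase i, (x i - x j) ≠ 0 := by
    rw [Finset.prod_ne_zero_iff]
    intro j hj h0
    rw [Finset.mem_erase] at hj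
    exact hj.1 (hx hj.2 hi (sub_eq_zero.mp h0).symm)
  have h5 := hlfDelta_update k x (x i - 1) i (by simpa using hi)
  have h6 : eval (x i) (X * ∏ j ∈ Finset.range k, (X - C (x j) - 1)
      - (X - C (k : ℚ)) * ∏ j ∈ Finset.range k, (X - C (x j)))
      = - x i * ∏ j ∈ (Finset.range k).erase i, (x i - 1 - x j) := by
    simp only [eval_sub, eval_mul, eval_X, eval_prod, eval_C, eval_one]
    rw [Finset.prod_eq_zero (f := fun j => x i - x j) hi (sub_self _), ← Finset.mul_prod_erase _ _ hi]
    have : ∀ j, x i - x j - 1 = x i - 1 - x j := fun j => by ring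
    simp only [this]
    ring
  rw [h6]
  field_simp
  linear_combination x i * h5

theorem hlf_row (μ : YoungDiagram) (k i : ℕ) (hk : ∀ i, k ≤ i → μ.rowLen i = 0) (hi : i < k) :
    (∏ j ∈ Finset.range (μ.rowLen i), (μ.rowLen i + μ.colLen j - i - j - 1)) *
      ∏ a ∈ Finset.Ioo i k, ((μ.rowLen i + (k - 1 - i)) - (μ.rowLen a + (k - 1 - a)))
      = (μ.rowLen i + (k - 1 - i)).factorial := by
  have hmem : ∀ a j, a < μ.colLen j ↔ j < μ.rowLen a := fun a j => by
    rw [← YoungDiagram.mem_iff_lt_colLen, ← YoungDiagram.mem_iff_lt_rowLen]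
  have hck : ∀ j, μ.colLen j ≤ k := by
    intro j
    by_contra h
    have := (hmem k j).1 (by omega)
    rw [hk k le_rfl] at this
    omega
  set L := μ.rowLen i + (k - 1 - i) with hL
  set A : ℕ → ℕ := fun j => j + (k - μ.colLen j) with hA
  set B : ℕ → ℕ := fun a => μ.rowLen a + (k - 1 - a) with hB
  have hAinj : Set.InjOn A (Finset.range (μ.rowLen i) : Finset ℕ) := by
    have : StrictMono A := by
      intro a b hab
      have := μ.colLen_anti a b hab.le
      simp only [hA]; omega
    exact this.injective.injOn
  have hBanti : ∀ a b, a < b → b < k → B b < B a := by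
    intro a b hab hb
    have := μ.rowLen_anti a b hab.le
    simp only [hB]; omega
  have hBinj : Set.InjOn B (Finset.Ioo i k : Finset ℕ) := by
    intro a ha b hb hab
    simp only [Finset.coe_Ioo, Set.mem_Ioo] at ha hb
    rcases lt_trichotomy a b with h | h | h
    · have := hBanti a b h hb.2; omega
    · exact h
    · have := hBanti b a h ha.2; omega
  have hdisj : Disjoint ((Finset.range (μ.rowLen i)).image A) ((Finset.Ioo i k).image B) := by
    rw [Finset.disjoint_left]
    intro t ht1 ht2
    simp only [Finset.mem_image, Finset.mem_range, Finset.mem_Ioo] at ht1 ht2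
    obtain ⟨j, hj, rfl⟩ := ht1
    obtain ⟨a, ha, hab⟩ := ht2
    have := hmem a j
    have := hck j
    simp only [hA, hB] at hab
    by_cases h : a < μ.colLen j
    · have := (hmem a j).1 h; omega
    · have := fun h' => h ((hmem a j).2 h'); omega
  have hunion : (Finset.range (μ.rowLen i)).image A ∪ (Finset.Ioo i k).image B
      = Finset.range L := by
    apply Finset.eq_of_subset_of_card_le
    · intro t ht
      simp only [Finset.mem_union, Finset.mem_image, Finset.mem_range, Finset.mem_Ioo] at ht ⊢
      rcases ht with ⟨j, hj, rfl⟩ | ⟨a, ha, rfl⟩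
      · have := (hmem i j).2 hj
        have := hck j
        simp only [hA]; omega
      · exact hBanti i a ha.1 ha.2
    · rw [Finset.card_union_of_disjoint hdisj, Finset.card_image_of_injOn hAinj,
        Finset.card_image_of_injOn hBinj]
      simp; omega
  have hfac : L.factorial = ∏ t ∈ Finset.range L, (L - t) := by
    rw [← Finset.prod_range_add_one_eq_factorial, ← Finset.prod_range_reflect]
    refine Finset.prod_congr rfl fun t ht => ?_
    simp only [Finset.mem_range] at ht
    omega
  rw [hfac, ← hunion, Finset.prod_union hdisj, Finset.prod_image hAinj, Finset.prod_image hBinj]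
  congr 1
  refine Finset.prod_congr rfl fun j hj => ?_
  simp only [Finset.mem_range] at hj
  have := (hmem i j).2 hj
  have := hck j
  simp only [hA]; omega

/-- shifted row lengths -/
def hlfEll (μ : YoungDiagram) (k i : ℕ) : ℕ := μ.rowLen i + (k - 1 - i)

theorem hlf_cells {M : Type*} [CommMonoid M] (μ : YoungDiagram) (k : ℕ)
    (hk : ∀ i, k ≤ i → μ.rowLen i = 0)
    (g : ℕ × ℕ → M) :
    ∏ c ∈ μ.cells, g c = ∏ i ∈ Finset.range k, ∏ j ∈ Finset.range (μ.rowLen i), g (i, j) := by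
  rw [Finset.prod_sigma']
  symm
  refine Finset.prod_bij (fun p _ => (p.1, p.2)) ?_ ?_ ?_ ?_
  · rintro ⟨i, j⟩ h
    simp only [Finset.mem_sigma, Finset.mem_range] at h
    exact YoungDiagram.mem_iff_lt_rowLen.2 h.2
  · rintro ⟨i, j⟩ _ ⟨i', j'⟩ _ h
    simp only [Prod.mk.injEq] at h
    obtain ⟨rfl, rfl⟩ := h
    rfl
  · rintro ⟨i, j⟩ h
    have h' : j < μ.rowLen i := YoungDiagram.mem_iff_lt_rowLen.1 h
    refine ⟨⟨i, j⟩, ?_, rfl⟩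
    simp only [Finset.mem_sigma, Finset.mem_range]
    refine ⟨?_, h'⟩
    by_contra hc
    rw [hk i (by omega)] at h'
    omega
  · rintro ⟨i, j⟩ _; rfl

theorem hlf_card (μ : YoungDiagram) (k : ℕ) (hk : ∀ i, k ≤ i → μ.rowLen i = 0) :
    ∑ i ∈ Finset.range k, ((hlfEll μ k i : ℚ) - i) = μ.card := by
  have h := hlf_cells (M := Multiplicative ℕ) μ k hk (fun _ => Multiplicative.ofAdd 1)
  have h1 : μ.card = ∑ i ∈ Finset.range k, μ.rowLen i := by
    have := congrArg Multiplicative.toAdd h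
    simpa using this
  have h2 : ∑ i ∈ Finset.range k, (hlfEll μ k i) =
      ∑ i ∈ Finset.range k, μ.rowLen i + ∑ i ∈ Finset.range k, i := by
    unfold hlfEll
    rw [Finset.sum_add_distrib, Finset.sum_range_reflect (fun i => i) k]
  rw [Finset.sum_sub_distrib, h1]
  have h3 : ((∑ i ∈ Finset.range k, (hlfEll μ k i) : ℕ) : ℚ) =
    ((∑ i ∈ Finset.range k, μ.rowLen i + ∑ i ∈ Finset.range k, i : ℕ) : ℚ) := by rw [h2]
  push_cast at h3 ⊢
  linarith

theorem hlfEll_lt (μ : YoungDiagram) (k a b : ℕ) (hab : a < b) (hb : b < k) :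
    hlfEll μ k b < hlfEll μ k a := by
  have := μ.rowLen_anti a b hab.le
  simp only [hlfEll]; omega

theorem hlf_hooks (μ : YoungDiagram) (k : ℕ) (hk : ∀ i, k ≤ i → μ.rowLen i = 0) :
    ((∏ c ∈ μ.cells, (μ.rowLen c.1 + μ.colLen c.2 - c.1 - c.2 - 1) : ℕ) : ℚ) *
      hlfDelta k (fun i => (hlfEll μ k i : ℚ))
      = ∏ i ∈ Finset.range k, ((hlfEll μ k i).factorial : ℚ) := by
  have h1 : hlfDelta k (fun i => (hlfEll μ k i : ℚ)) =
      ((∏ i ∈ Finset.range k, ∏ a ∈ Finset.Ioo i k,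
        (hlfEll μ k i - hlfEll μ k a) : ℕ) : ℚ) := by
    unfold hlfDelta
    rw [Finset.prod_comm' (t' := Finset.range k) (s' := fun i => Finset.Ioo i k)
      (by intro x y; simp only [Finset.mem_range, Finset.mem_Ioo]; omega)]
    push_cast
    refine Finset.prod_congr rfl fun i hi => Finset.prod_congr rfl fun a ha => ?_
    rw [Finset.mem_Ioo] at ha
    rw [Nat.cast_sub (hlfEll_lt μ k i a ha.1 ha.2).le]
  rw [h1, hlf_cells μ k hk, ← Nat.cast_mul, ← Finset.prod_mul_distrib, ← Nat.cast_prod]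
  congr 1
  exact Finset.prod_congr rfl fun i hi => hlf_row μ k i hk (by simpa using hi)

/-- Standard fillings, as functions vanishing off the diagram. -/
def hlfS (μ : YoungDiagram) : Set (ℕ × ℕ → ℕ) :=
  {f | (∀ c, c ∉ μ → f c = 0) ∧ (∀ c ∈ μ, f c < μ.card) ∧
    (∀ c ∈ μ, ∀ d ∈ μ, f c = f d → c = d) ∧
    ∀ c ∈ μ, ∀ d ∈ μ, ((c.1 = d.1 ∧ c.2 < d.2) ∨ (c.2 = d.2 ∧ c.1 < d.1)) → f c < f d}

theorem hlf_exists_bij (μ : YoungDiagram) :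
    ∃ F : {T : {c : ℕ × ℕ // c ∈ μ} ≃ Fin μ.card //
      ∀ c d : {c : ℕ × ℕ // c ∈ μ},
      ((c.1.1 = d.1.1 ∧ c.1.2 < d.1.2) ∨ (c.1.2 = d.1.2 ∧ c.1.1 < d.1.1)) → T c < T d} → hlfS μ,
      Function.Bijective F := by
  refine ⟨fun T => ⟨fun c => if h : c ∈ μ then (T.1 ⟨c, h⟩ : ℕ) else 0, ?_, ?_, ?_, ?_⟩, ?_, ?_⟩
  · intro c hc; simp [hc]
  · intro c hc; simp [hc]
  · intro c hc d hd h
    simp only [hc, hd, dif_pos] at h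
    have := T.1.injective (Fin.ext h)
    simpa using this
  · intro c hc d hd h
    simp only [hc, hd, dif_pos]
    exact T.2 ⟨c, hc⟩ ⟨d, hd⟩ h
  · intro T T' h
    apply Subtype.ext
    apply Equiv.ext
    rintro ⟨c, hc⟩
    have := congrFun (congrArg Subtype.val h) c
    simp only [hc, dif_pos] at this
    exact Fin.ext this
  · rintro ⟨f, h1, h2, h3, h4⟩
    have hfin : Fintype {c : ℕ × ℕ // c ∈ μ} := Fintype.subtype μ.cells (fun x => Iff.rfl)
    have hb : Function.Bijective (fun c : {c : ℕ × ℕ // c ∈ μ} => (⟨f c.1, h2 c.1 c.2⟩ : Fin μ.card)) := by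
      rw [Fintype.bijective_iff_injective_and_card]
      constructor
      · intro c d h
        exact Subtype.ext (h3 c.1 c.2 d.1 d.2 (by simpa using h))
      · rw [Fintype.card_fin]
        exact Fintype.card_of_subtype μ.cells (fun x => Iff.rfl)
    refine ⟨⟨Equiv.ofBijective _ hb, ?_⟩, ?_⟩
    · intro c d h
      exact h4 c.1 c.2 d.1 d.2 h
    · apply Subtype.ext
      funext c
      by_cases hc : c ∈ μ
      · simp [hc]
      · simp [hc, h1 c hc]

theorem hlf_sytCard (μ : YoungDiagram) : sytCard μ = Nat.card (hlfS μ) := by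
  obtain ⟨F, hF⟩ := hlf_exists_bij μ
  exact Nat.card_eq_of_bijective F hF

theorem hlf_finite (μ : YoungDiagram) : Finite (hlfS μ) := by
  obtain ⟨F, hF⟩ := hlf_exists_bij μ
  have hfin : Fintype {c : ℕ × ℕ // c ∈ μ} := Fintype.subtype μ.cells (fun x => Iff.rfl)
  have : Finite ({c : ℕ × ℕ // c ∈ μ} ≃ Fin μ.card) := inferInstance
  exact Finite.of_surjective F hF.2

theorem hlf_surj (μ : YoungDiagram) (f : ℕ × ℕ → ℕ) (hf : f ∈ hlfS μ) (m : ℕ) (hm : m < μ.card) :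
    ∃ c ∈ μ, f c = m := by
  obtain ⟨F, hF⟩ := hlf_exists_bij μ
  obtain ⟨h1, h2, h3, h4⟩ := hf
  have : μ.cells.image f = Finset.range μ.card := by
    apply Finset.eq_of_subset_of_card_le
    · intro t ht
      rw [Finset.mem_image] at ht
      obtain ⟨c, hc, rfl⟩ := ht
      exact Finset.mem_range.2 (h2 c hc)
    · rw [Finset.card_image_of_injOn (fun c hc d hd h => h3 c hc d hd h)]
      simp
  have h := Finset.mem_range.2 hm
  rw [← this, Finset.mem_image] at h
  exact h

/-- Remove the last cell of row `i`. -/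
def hlfDel (μ : YoungDiagram) (i : ℕ) (h : μ.rowLen (i + 1) < μ.rowLen i) : YoungDiagram where
  cells := μ.cells.erase (i, μ.rowLen i - 1)
  isLowerSet := by
    rintro ⟨a, b⟩ ⟨c, d⟩ hle hmem
    have hle1 : c ≤ a := hle.1
    have hle2 : d ≤ b := hle.2
    simp only [Finset.coe_erase, Set.mem_sdiff, Finset.mem_coe, YoungDiagram.mem_cells,
      Set.mem_singleton_iff, Prod.mk.injEq] at hmem ⊢
    refine ⟨μ.up_left_mem hle1 hle2 hmem.1, ?_⟩
    rintro ⟨rfl, rfl⟩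
    have h2 := YoungDiagram.mem_iff_lt_rowLen.1 hmem.1
    rcases Nat.lt_or_ge c a with hlt | hge
    · have := μ.rowLen_anti (c + 1) a hlt
      omega
    · have : a = c := by omega
      subst this
      exact hmem.2 ⟨rfl, by omega⟩

theorem hlfDel_mem (μ : YoungDiagram) (i : ℕ) (h : μ.rowLen (i + 1) < μ.rowLen i) (c : ℕ × ℕ) :
    c ∈ hlfDel μ i h ↔ c ≠ (i, μ.rowLen i - 1) ∧ c ∈ μ := by
  rw [← YoungDiagram.mem_cells, hlfDel, Finset.mem_erase]; rfl

theorem hlf_corner_mem (μ : YoungDiagram) (i : ℕ) (h : μ.rowLen (i + 1) < μ.rowLen i) :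
    (i, μ.rowLen i - 1) ∈ μ := YoungDiagram.mem_iff_lt_rowLen.2 (by omega)

theorem hlfDel_card (μ : YoungDiagram) (i : ℕ) (h : μ.rowLen (i + 1) < μ.rowLen i) :
    (hlfDel μ i h).card + 1 = μ.card :=
  Finset.card_erase_add_one (hlf_corner_mem μ i h)

theorem hlfDel_rowLen (μ : YoungDiagram) (i : ℕ) (h : μ.rowLen (i + 1) < μ.rowLen i) (a : ℕ) :
    (hlfDel μ i h).rowLen a = if a = i then μ.rowLen i - 1 else μ.rowLen a := by
  refine eq_of_forall_lt_iff fun j => ?_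
  rw [← YoungDiagram.mem_iff_lt_rowLen, hlfDel_mem, YoungDiagram.mem_iff_lt_rowLen]
  split_ifs with hai
  · subst hai
    simp only [ne_eq, Prod.mk.injEq, true_and]
    omega
  · simp [hai]

theorem hlf_recur (μ : YoungDiagram) (k : ℕ) (hk : ∀ i, k ≤ i → μ.rowLen i = 0) (m : ℕ)
    (hm : μ.card = m + 1) :
    ∃ F : (Σ i : {i : Fin k // μ.rowLen (i + 1) < μ.rowLen i}, hlfS (hlfDel μ i.1 i.2)) → hlfS μ,
      Function.Bijective F := by
  have hdm : ∀ i h, (hlfDel μ i h).card = m := fun i h => by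
    have := hlfDel_card μ i h; omega
  refine ⟨fun p => ⟨Function.update p.2.1 (p.1.1, μ.rowLen p.1.1 - 1) m, ?_, ?_, ?_, ?_⟩, ?_, ?_⟩
  · obtain ⟨⟨i, hi⟩, ⟨f, h1, h2, h3, h4⟩⟩ := p
    intro c hc
    have hne : c ≠ ((i : ℕ), μ.rowLen i - 1) := by
      rintro rfl; exact hc (hlf_corner_mem μ i hi)
    rw [Function.update_of_ne hne]
    exact h1 c (fun h => hc ((hlfDel_mem _ _ _ _).1 h).2)
  · obtain ⟨⟨i, hi⟩, ⟨f, h1, h2, h3, h4⟩⟩ := p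
    intro c hc
    by_cases hne : c = ((i : ℕ), μ.rowLen i - 1)
    · subst hne; simp [hm]
    · rw [Function.update_of_ne hne]
      have := h2 c ((hlfDel_mem _ _ _ _).2 ⟨hne, hc⟩)
      have := hdm i hi
      simp only at *
      omega
  · obtain ⟨⟨i, hi⟩, ⟨f, h1, h2, h3, h4⟩⟩ := p
    intro c hc d hd hcd
    have hlt : ∀ c ∈ μ, c ≠ ((i : ℕ), μ.rowLen i - 1) → f c < m := by
      intro c hc hne
      have := h2 c ((hlfDel_mem _ _ _ _).2 ⟨hne, hc⟩)
      have := hdm i hi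
      simp only at *
      omega
    by_cases hne : c = ((i : ℕ), μ.rowLen i - 1) <;> by_cases hne' : d = ((i : ℕ), μ.rowLen i - 1)
    · rw [hne, hne']
    · have := hlt d hd hne'
      subst hne
      rw [Function.update_self, Function.update_of_ne hne'] at hcd
      simp only at hcd
      omega
    · have := hlt c hc hne
      subst hne'
      rw [Function.update_self, Function.update_of_ne hne] at hcd
      simp only at hcd
      omega
    · rw [Function.update_of_ne hne, Function.update_of_ne hne'] at hcd
      exact h3 c ((hlfDel_mem _ _ _ _).2 ⟨hne, hc⟩) d ((hlfDel_mem _ _ _ _).2 ⟨hne', hd⟩) hcd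
  · obtain ⟨⟨i, hi⟩, ⟨f, h1, h2, h3, h4⟩⟩ := p
    intro c hc d hd hcd
    have hlt : ∀ c ∈ μ, c ≠ ((i : ℕ), μ.rowLen i - 1) → f c < m := by
      intro c hc hne
      have := h2 c ((hlfDel_mem _ _ _ _).2 ⟨hne, hc⟩)
      have := hdm i hi
      simp only at *
      omega
    by_cases hne : c = ((i : ℕ), μ.rowLen i - 1)
    · exfalso
      subst hne
      obtain ⟨a, b⟩ := d
      have hb := YoungDiagram.mem_iff_lt_rowLen.1 hd
      simp only at hcd
      rcases hcd with ⟨rfl, h⟩ | ⟨h, h'⟩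
      · omega
      · have := μ.rowLen_anti (i + 1) a h'
        omega
    · by_cases hne' : d = ((i : ℕ), μ.rowLen i - 1)
      · have := hlt c hc hne
        subst hne'
        rwa [Function.update_self, Function.update_of_ne hne]
      · rw [Function.update_of_ne hne, Function.update_of_ne hne']
        exact h4 c ((hlfDel_mem _ _ _ _).2 ⟨hne, hc⟩) d ((hlfDel_mem _ _ _ _).2 ⟨hne', hd⟩) hcd
  · rintro ⟨⟨i, hi⟩, ⟨f, hf⟩⟩ ⟨⟨i', hi'⟩, ⟨f', hf'⟩⟩ h
    have h : Function.update f ((i : ℕ), μ.rowLen i - 1) m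
      = Function.update f' ((i' : ℕ), μ.rowLen i' - 1) m := congrArg Subtype.val h
    have hii : i = i' := by
      by_contra hne
      have hne2 : ((i : ℕ), μ.rowLen i - 1) ≠ ((i' : ℕ), μ.rowLen i' - 1) := by
        intro h; exact hne (Fin.ext (congrArg Prod.fst h))
      have h5 := congrFun h ((i : ℕ), μ.rowLen i - 1)
      rw [Function.update_self, Function.update_of_ne hne2] at h5
      have h6 := hf'.2.1 _ ((hlfDel_mem _ _ _ _).2 ⟨hne2, hlf_corner_mem μ i hi⟩)
      have := hdm i' hi'
      simp only at *
      omega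
    subst hii
    have hff : f = f' := by
      funext c
      by_cases hc : c = ((i : ℕ), μ.rowLen i - 1)
      · rw [hf.1 c (fun h => ((hlfDel_mem _ _ _ _).1 h).1 hc),
          hf'.1 c (fun h => ((hlfDel_mem _ _ _ _).1 h).1 hc)]
      · have h5 := congrFun h c
        rwa [Function.update_of_ne hc, Function.update_of_ne hc] at h5
    subst hff
    rfl
  · rintro ⟨g, hg⟩
    obtain ⟨⟨i, j⟩, hc, hgc⟩ := hlf_surj μ g hg m (by omega)
    obtain ⟨h1, h2, h3, h4⟩ := hg
    have hj := YoungDiagram.mem_iff_lt_rowLen.1 hc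
    have hj' : j = μ.rowLen i - 1 := by
      by_contra hne
      have hd : (i, j + 1) ∈ μ := YoungDiagram.mem_iff_lt_rowLen.2 (by omega)
      have := h4 _ hc _ hd (Or.inl ⟨rfl, Nat.lt_succ_self j⟩)
      have := h2 _ hd
      omega
    have hi : μ.rowLen (i + 1) < μ.rowLen i := by
      by_contra hne
      have hd : (i + 1, j) ∈ μ := YoungDiagram.mem_iff_lt_rowLen.2 (by omega)
      have := h4 _ hc _ hd (Or.inr ⟨rfl, Nat.lt_succ_self i⟩)
      have := h2 _ hd
      omega
    have hik : i < k := by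
      by_contra hne
      rw [hk i (by omega)] at hj
      omega
    subst hj'
    refine ⟨⟨⟨⟨i, hik⟩, hi⟩, ⟨Function.update g (i, μ.rowLen i - 1) 0, ?_, ?_, ?_, ?_⟩⟩, ?_⟩
    · intro c hc'
      by_cases hne : c = (i, μ.rowLen i - 1)
      · subst hne; simp
      · rw [Function.update_of_ne hne]
        exact h1 c (fun h => hc' ((hlfDel_mem _ _ _ _).2 ⟨hne, h⟩))
    · intro c hc'
      obtain ⟨hne, hcm⟩ := (hlfDel_mem _ _ _ _).1 hc'
      rw [hdm i hi]
      have hne' : c ≠ (i, μ.rowLen i - 1) := hne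
      rw [Function.update_of_ne hne']
      have h5 := h2 c hcm
      have h6 : g c ≠ m := fun h => hne' (h3 _ hcm _ hc (h.trans hgc.symm))
      omega
    · intro c hc' d hd' h
      obtain ⟨hne, hcm⟩ := (hlfDel_mem _ _ _ _).1 hc'
      obtain ⟨hne', hdm⟩ := (hlfDel_mem _ _ _ _).1 hd'
      rw [Function.update_of_ne hne, Function.update_of_ne hne'] at h
      exact h3 c hcm d hdm h
    · intro c hc' d hd' h
      obtain ⟨hne, hcm⟩ := (hlfDel_mem _ _ _ _).1 hc'
      obtain ⟨hne', hdm⟩ := (hlfDel_mem _ _ _ _).1 hd'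
      rw [Function.update_of_ne hne, Function.update_of_ne hne']
      exact h4 c hcm d hdm h
    · apply Subtype.ext
      simp only [Function.update_idem]
      rw [← hgc, Function.update_eq_self]

theorem hlf_recur_card (μ : YoungDiagram) (k : ℕ) (hk : ∀ i, k ≤ i → μ.rowLen i = 0) (m : ℕ)
    (hm : μ.card = m + 1) :
    Nat.card (hlfS μ) = ∑ i ∈ Finset.range k,
      if h : μ.rowLen (i + 1) < μ.rowLen i then Nat.card (hlfS (hlfDel μ i h)) else 0 := by
  obtain ⟨F, hF⟩ := hlf_recur μ k hk m hm
  have := hlf_finite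
  rw [← Nat.card_eq_of_bijective F hF, Nat.card_sigma, Finset.sum_range]
  symm
  rw [← Finset.sum_filter_add_sum_filter_not Finset.univ
    (fun i : Fin k => μ.rowLen (i + 1) < μ.rowLen i)]
  rw [Finset.sum_eq_zero (s := Finset.filter (fun i : Fin k => ¬ _) _)
    (fun i hi => dif_neg (Finset.mem_filter.1 hi).2), add_zero]
  rw [Finset.sum_subtype (p := fun i : Fin k => μ.rowLen (i + 1) < μ.rowLen i) _ (by simp)]
  exact Finset.sum_congr rfl fun i _ => dif_pos i.2

theorem hlf_main (k n : ℕ) : ∀ μ : YoungDiagram, (∀ i, k ≤ i → μ.rowLen i = 0) → μ.card = n →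
    (Nat.card (hlfS μ) : ℚ) * ∏ i ∈ Finset.range k, ((hlfEll μ k i).factorial : ℚ)
      = n.factorial * hlfDelta k (fun i => (hlfEll μ k i : ℚ)) := by
  induction n with
  | zero =>
    intro μ hk hn
    have hc : μ.cells = ∅ := Finset.card_eq_zero.1 hn
    have hnm : ∀ c, c ∉ μ := by
      intro c h; rw [← YoungDiagram.mem_cells, hc] at h; simp at h
    rw [← hlf_hooks μ k hk, hc]
    have h1 : hlfS μ = {fun _ => 0} := by
      ext f
      simp only [hlfS, Set.mem_ofPred_eq, Set.mem_singleton_iff]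
      constructor
      · rintro ⟨h, -⟩; funext c; exact h c (hnm c)
      · rintro rfl
        exact ⟨fun _ _ => rfl, fun c h => absurd h (hnm c), fun c h => absurd h (hnm c),
          fun c h => absurd h (hnm c)⟩
    rw [h1]; simp
  | succ m ih =>
    intro μ hk hn
    have hinj : Set.InjOn (fun i => (hlfEll μ k i : ℚ)) (Finset.range k : Finset ℕ) := by
      intro a ha b hb hab
      simp only [Finset.coe_range, Set.mem_Iio] at ha hb
      simp only at hab
      have hab : hlfEll μ k a = hlfEll μ k b := by exact_mod_cast hab
      rcases lt_trichotomy a b with h | h | h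
      · have := hlfEll_lt μ k a b h hb; omega
      · exact h
      · have := hlfEll_lt μ k b a h ha; omega
    have hsum := hlf_sum k _ hinj
    rw [hlf_card μ k hk, hn] at hsum
    rw [hlf_recur_card μ k hk m hn, Nat.factorial_succ, Nat.cast_mul, mul_comm ((m + 1 : ℕ) : ℚ),
      mul_assoc, ← hsum, Nat.cast_sum, Finset.sum_mul, Finset.mul_sum]
    refine Finset.sum_congr rfl fun i hi => ?_
    have hik : i < k := by simpa using hi
    split_ifs with h
    · have h1 := ih (hlfDel μ i h) (by
        intro a ha
        rw [hlfDel_rowLen, if_neg (by omega), hk a ha]) (by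
        have := hlfDel_card μ i h; omega)
      have hpos : 0 < hlfEll μ k i := by simp only [hlfEll]; omega
      have h2 : (fun a => (hlfEll (hlfDel μ i h) k a : ℚ)) =
          Function.update (fun a => (hlfEll μ k a : ℚ)) i ((hlfEll μ k i : ℚ) - 1) := by
        funext a
        by_cases ha : a = i
        · subst ha
          rw [Function.update_self, ← Nat.cast_one, ← Nat.cast_sub hpos]
          congr 1
          simp only [hlfEll, hlfDel_rowLen, if_true]
          omega
        · rw [Function.update_of_ne ha]
          simp only [hlfEll, hlfDel_rowLen, if_neg ha]
      rw [h2] at h1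
      have h3 : ∏ a ∈ Finset.range k, ((hlfEll μ k a).factorial : ℚ)
          = (hlfEll μ k i : ℚ) *
            ∏ a ∈ Finset.range k, ((hlfEll (hlfDel μ i h) k a).factorial : ℚ) := by
        rw [← Finset.mul_prod_erase _ _ hi, ← Finset.mul_prod_erase (Finset.range k)
          (fun a => ((hlfEll (hlfDel μ i h) k a).factorial : ℚ)) hi, ← mul_assoc]
        congr 1
        · have h4 : hlfEll (hlfDel μ i h) k i = hlfEll μ k i - 1 := by
            simp only [hlfEll, hlfDel_rowLen, if_true]
            omega
          rw [h4, ← Nat.cast_mul, Nat.mul_factorial_pred (by omega)]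
        · refine Finset.prod_congr rfl fun a ha => ?_
          simp only [hlfEll, hlfDel_rowLen, if_neg (Finset.ne_of_mem_erase ha)]
      rw [h3]
      linear_combination (hlfEll μ k i : ℚ) * h1
    · rw [Nat.cast_zero, zero_mul]
      symm
      by_cases hlast : i + 1 = k
      · have : hlfEll μ k i = 0 := by
          have := hk (i + 1) (by omega)
          simp only [hlfEll]; omega
        rw [this]; simp
      · have h5 : hlfDelta k (Function.update (fun a => (hlfEll μ k a : ℚ)) i
            ((hlfEll μ k i : ℚ) - 1)) = 0 := by
          unfold hlfDelta
          apply Finset.prod_eq_zero (i := i + 1) (by simp; omega)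
          apply Finset.prod_eq_zero (i := i) (by simp)
          rw [Function.update_self, Function.update_of_ne (by omega)]
          have h6 : hlfEll μ k i = hlfEll μ k (i + 1) + 1 := by
            have := μ.rowLen_anti i (i + 1) (by omega)
            simp only [hlfEll]; omega
          rw [h6]; push_cast; ring
        rw [h5]; simp

/-- The hook-length formula: `f^λ = n! / ∏_{(i,j) ∈ λ} h_λ(i,j)`, where in 0-based
coordinates the hook length of cell `(i,j)` is `rowLen i + colLen j - i - j - 1`. -/
theorem hook_length_formula (μ : YoungDiagram) :
    sytCard μ =
      Nat.factorial μ.card /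
        ∏ c ∈ μ.cells, (μ.rowLen c.1 + μ.colLen c.2 - c.1 - c.2 - 1) := by
  have hk : ∀ i, μ.colLen 0 ≤ i → μ.rowLen i = 0 := by
    intro i hi
    by_contra h
    have h1 : (i, 0) ∈ μ := YoungDiagram.mem_iff_lt_rowLen.2 (by omega)
    have := YoungDiagram.mem_iff_lt_colLen.1 h1
    omega
  have h1 := hlf_main (μ.colLen 0) μ.card μ hk rfl
  have h2 := hlf_hooks μ (μ.colLen 0) hk
  set H := ∏ c ∈ μ.cells, (μ.rowLen c.1 + μ.colLen c.2 - c.1 - c.2 - 1) with hH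
  have hpos : (∏ i ∈ Finset.range (μ.colLen 0), ((hlfEll μ (μ.colLen 0) i).factorial : ℚ)) ≠ 0 := by
    rw [Finset.prod_ne_zero_iff]
    intro i _
    exact_mod_cast Nat.factorial_ne_zero _
  rw [← h2] at h1 hpos
  have hH0 : (H : ℚ) ≠ 0 := left_ne_zero_of_mul hpos
  have hD0 := right_ne_zero_of_mul hpos
  have h3 : (Nat.card (hlfS μ) : ℚ) * H = μ.card.factorial := by
    apply mul_right_cancel₀ hD0
    rw [← h1]; ring
  have h4 : Nat.card (hlfS μ) * H = μ.card.factorial := by exact_mod_cast h3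
  rw [hlf_sytCard]
  have hH1 : H ≠ 0 := by exact_mod_cast hH0
  exact Nat.eq_div_of_mul_eq_left hH1 h4
end

section
/- For partitions λ, μ, ν of n, if μ majorizes ν then the Kostka number K_{λμ} is at most K_{λν}. -/
open scoped Classical in
/-- The Kostka number `K_{λμ}`: the number of semistandard Young tableaux of
shape `λ` whose content is `μ`, i.e. with exactly `μ v` entries equal to `v`
for every value `v`. -/
noncomputable def kostka (lam : YoungDiagram) (mu : ℕ → ℕ) : ℕ :=
  Nat.card {T : SemistandardYoungTableau lam //
    ∀ v : ℕ, (lam.cells.filter (fun c => T c.1 c.2 = v)).card = mu v}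


namespace KostkaAux

/-- Leftmost maximum of an eventually constant integer sequence. -/
lemma exists_peak (H : ℕ → ℤ) (N : ℕ) (hN : ∀ k, N ≤ k → H k = H N)
    (p : ℕ) (hp : H 0 < H p) :
    ∃ j, (∀ k, k ≤ j → H k < H (j + 1)) ∧ ∀ k, H k ≤ H (j + 1) := by
  classical
  have hex : ∃ m, ∀ k, H k ≤ H m := by
    obtain ⟨m, _, hm⟩ := Finset.exists_max_image (Finset.range (N + 1)) H ⟨0, by simp⟩
    refine ⟨m, fun k => ?_⟩
    rcases le_total N k with h | h
    · rw [hN k h]; exact hm N (by simp)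
    · exact hm k (by simp; omega)
  obtain ⟨j, hj⟩ : ∃ j, Nat.find hex = j + 1 := by
    refine Nat.exists_eq_succ_of_ne_zero fun h => ?_
    have := Nat.find_spec hex p
    rw [h] at this
    omega
  have hs := Nat.find_spec hex
  rw [hj] at hs
  refine ⟨j, fun k hk => ?_, hs⟩
  by_contra hcon
  refine Nat.find_min hex (m := k) (by omega) fun l => ?_
  have := hs l
  omega

/-- Effect of changing one entry on counts. -/
lemma count_update (s : Finset (ℕ × ℕ)) (x : ℕ × ℕ) (hx : x ∈ s) (f g : ℕ × ℕ → ℕ) (a : ℕ)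
    (hf : f x = a) (hg : g x = a + 1) (hfg : ∀ y, y ≠ x → g y = f y) (v : ℕ) :
    ((s.filter (fun c => g c = v)).card : ℤ) = (s.filter (fun c => f c = v)).card
      - (if v = a then 1 else 0) + (if v = a + 1 then 1 else 0) := by
  rw [Finset.card_filter, Finset.card_filter, ← Finset.add_sum_erase s _ hx,
    ← Finset.add_sum_erase s (fun c => if f c = v then 1 else 0) hx]
  have : ∑ c ∈ s.erase x, (if g c = v then 1 else 0) =
      ∑ c ∈ s.erase x, (if f c = v then 1 else 0) :=
    Finset.sum_congr rfl fun y hy => by rw [hfg y (Finset.ne_of_mem_erase hy)]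
  rw [this, hf, hg]
  push_cast
  have h1 : (a = v) = (v = a) := propext eq_comm
  have h2 : (a + 1 = v) = (v = a + 1) := propext eq_comm
  simp only [h1, h2]
  ring

/-- The cells in column `j`. -/
def colCells (lam : YoungDiagram) (j : ℕ) : Finset (ℕ × ℕ) := lam.cells.filter (fun c => c.2 = j)

/-- number of `v` in column `j`. -/
def cnt (lam : YoungDiagram) (T : SemistandardYoungTableau lam) (v j : ℕ) : ℕ :=
  ((colCells lam j).filter (fun c => T c.1 c.2 = v)).card

/-- height function -/
def ht (lam : YoungDiagram) (T : SemistandardYoungTableau lam) (a k : ℕ) : ℤ :=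
  ∑ j ∈ Finset.range k, ((cnt lam T a j : ℤ) - cnt lam T (a + 1) j)

lemma ht_succ (lam : YoungDiagram) (T : SemistandardYoungTableau lam) (a k : ℕ) :
    ht lam T a (k + 1) = ht lam T a k + ((cnt lam T a k : ℤ) - cnt lam T (a + 1) k) :=
  Finset.sum_range_succ _ _

lemma col_inj (lam : YoungDiagram) (T : SemistandardYoungTableau lam) {i i' j : ℕ}
    (h : (i, j) ∈ lam) (h' : (i', j) ∈ lam) (e : T i j = T i' j) : i = i' := by
  rcases lt_trichotomy i i' with hl | hl | hl
  · have := T.col_strict hl h'; omega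
  · exact hl
  · have := T.col_strict hl h; omega

lemma cnt_le_one (lam : YoungDiagram) (T : SemistandardYoungTableau lam) (v j : ℕ) :
    cnt lam T v j ≤ 1 := by
  unfold cnt
  rw [Finset.card_le_one]
  rintro ⟨i, k⟩ h ⟨i', k'⟩ h'
  simp only [colCells, Finset.mem_filter, YoungDiagram.mem_cells] at h h'
  obtain ⟨⟨h1, rfl⟩, h2⟩ := h
  obtain ⟨⟨h1', rfl⟩, h2'⟩ := h'
  rw [col_inj lam T h1 h1' (h2.trans h2'.symm)]

lemma cnt_pos (lam : YoungDiagram) (T : SemistandardYoungTableau lam) (v j : ℕ) :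
    0 < cnt lam T v j ↔ ∃ i, (i, j) ∈ lam ∧ T i j = v := by
  unfold cnt
  rw [Finset.card_pos]
  constructor
  · rintro ⟨⟨i, k⟩, h⟩
    simp only [colCells, Finset.mem_filter, YoungDiagram.mem_cells] at h
    obtain ⟨⟨h1, rfl⟩, h2⟩ := h
    exact ⟨i, h1, h2⟩
  · rintro ⟨i, h1, h2⟩
    exact ⟨(i, j), by simp [colCells, h1, h2]⟩

/-- `T'` is obtained from `T` by the crystal operator at the cell `(i,j)`. -/
structure Rel (lam : YoungDiagram) (a : ℕ) (T T' : SemistandardYoungTableau lam) (i j : ℕ) :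
    Prop where
  mem : (i, j) ∈ lam
  old : T i j = a
  new : T' i j = a + 1
  same : ∀ y : ℕ × ℕ, y ≠ (i, j) → T' y.1 y.2 = T y.1 y.2
  lt : ∀ k, k ≤ j → ht lam T a k < ht lam T a (j + 1)
  le : ∀ k, ht lam T a k ≤ ht lam T a (j + 1)

lemma Rel.cnt_ne {lam : YoungDiagram} {a : ℕ} {T T' : SemistandardYoungTableau lam} {i j : ℕ}
    (h : Rel lam a T T' i j) (v k : ℕ) (hk : k ≠ j) : cnt lam T' v k = cnt lam T v k := by
  unfold cnt
  congr 1
  refine Finset.filter_congr fun c hc => ?_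
  rw [h.same c]
  rintro rfl
  simp [colCells] at hc
  exact hk hc.2.symm

lemma Rel.cnt_eq {lam : YoungDiagram} {a : ℕ} {T T' : SemistandardYoungTableau lam} {i j : ℕ}
    (h : Rel lam a T T' i j) (v : ℕ) : (cnt lam T' v j : ℤ) = cnt lam T v j
      - (if v = a then 1 else 0) + (if v = a + 1 then 1 else 0) :=
  count_update (colCells lam j) (i, j) (by simp [colCells, h.mem]) (fun c => T c.1 c.2)
    (fun c => T' c.1 c.2) a h.old h.new h.same v

lemma Rel.ht_eq {lam : YoungDiagram} {a : ℕ} {T T' : SemistandardYoungTableau lam} {i j : ℕ}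
    (h : Rel lam a T T' i j) (k : ℕ) :
    ht lam T' a k = ht lam T a k - (if j < k then 2 else 0) := by
  induction k with
  | zero => simp [ht]
  | succ k ih =>
    rw [ht_succ, ht_succ, ih]
    by_cases hk : k = j
    · subst hk
      rw [h.cnt_eq, h.cnt_eq]
      simp
      ring
    · rw [h.cnt_ne _ _ hk, h.cnt_ne _ _ hk]
      have : (j < k + 1) = (j < k) := propext (by omega)
      simp only [this]
      ring

lemma Rel.col_le {lam : YoungDiagram} {a : ℕ} {T₁ T₂ T' : SemistandardYoungTableau lam}
    {i₁ j₁ i₂ j₂ : ℕ} (h₁ : Rel lam a T₁ T' i₁ j₁) (h₂ : Rel lam a T₂ T' i₂ j₂) : j₁ ≤ j₂ := by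
  by_contra hlt
  push Not at hlt
  have e1 := h₁.ht_eq j₁
  have e2 := h₁.ht_eq j₂
  have e3 := h₂.ht_eq j₁
  have e4 := h₂.ht_eq j₂
  have e5 := h₂.ht_eq (j₂ + 1)
  have e6 := h₂.le j₁
  have e8 := ht_succ lam T₂ a j₂
  have e9 := cnt_le_one lam T₂ a j₂
  have f1 := h₁.lt j₂ hlt.le
  have f8 := ht_succ lam T₁ a j₁
  have f9 := cnt_le_one lam T₁ a j₁
  simp [hlt] at e1 e2 e3 e4 e5
  rw [if_neg (by omega)] at e2
  omega

lemma Rel.inj {lam : YoungDiagram} {a : ℕ} {T₁ T₂ T' : SemistandardYoungTableau lam}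
    {i₁ j₁ i₂ j₂ : ℕ} (h₁ : Rel lam a T₁ T' i₁ j₁) (h₂ : Rel lam a T₂ T' i₂ j₂) : T₁ = T₂ := by
  obtain rfl : j₁ = j₂ := le_antisymm (h₁.col_le h₂) (h₂.col_le h₁)
  obtain rfl : i₁ = i₂ := col_inj lam T' h₁.mem h₂.mem (h₁.new.trans h₂.new.symm)
  ext i j
  by_cases h : (i, j) = (i₁, j₁)
  · obtain ⟨rfl, rfl⟩ := Prod.mk.inj h
    rw [h₁.old, h₂.old]
  · exact (h₁.same (i, j) h).symm.trans (h₂.same (i, j) h)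

lemma exists_rel (lam : YoungDiagram) (a : ℕ) (T : SemistandardYoungTableau lam)
    (h : (lam.cells.filter (fun c => T c.1 c.2 = a + 1)).card <
      (lam.cells.filter (fun c => T c.1 c.2 = a)).card) :
    ∃ T' i j, Rel lam a T T' i j := by
  classical
  obtain ⟨N, hN⟩ : ∃ N, ∀ c ∈ lam.cells, c.2 < N := by
    refine ⟨lam.cells.sup (fun c => c.2) + 1, fun c hc => ?_⟩
    exact Nat.lt_succ_of_le (Finset.le_sup (f := fun c : ℕ × ℕ => c.2) hc)
  have htot : ∀ v, (lam.cells.filter (fun c => T c.1 c.2 = v)).card =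
      ∑ j ∈ Finset.range N, cnt lam T v j := by
    intro v
    rw [Finset.card_eq_sum_card_fiberwise (f := fun c => c.2) (t := Finset.range N)]
    · refine Finset.sum_congr rfl fun j _ => ?_
      unfold cnt colCells
      rw [Finset.filter_comm]
    · intro c hc
      simp only [Finset.coe_filter, Set.mem_ofPred_eq] at hc
      simpa using hN c hc.1
  have hcnt0 : ∀ v k, N ≤ k → cnt lam T v k = 0 := by
    intro v k hk
    by_contra hne
    obtain ⟨i, hi, _⟩ := (cnt_pos lam T v k).1 (Nat.pos_of_ne_zero hne)
    have := hN (i, k) (by simpa using hi)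
    simp at this
    omega
  have hconst : ∀ k, N ≤ k → ht lam T a k = ht lam T a N := by
    intro k hk
    induction k, hk using Nat.le_induction with
    | base => rfl
    | succ k hk ih => rw [ht_succ, hcnt0 _ _ hk, hcnt0 _ _ hk, ih]; simp
  have hpos : ht lam T a 0 < ht lam T a N := by
    have e0 : ht lam T a 0 = 0 := by simp [ht]
    rw [htot, htot] at h
    have : ht lam T a N = ((∑ j ∈ Finset.range N, cnt lam T a j : ℕ) : ℤ) -
        ((∑ j ∈ Finset.range N, cnt lam T (a + 1) j : ℕ) : ℤ) := by
      simp [ht]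
    omega
  obtain ⟨j, hlt, hle⟩ := exists_peak (ht lam T a) N hconst N hpos
  have s1 := ht_succ lam T a j
  have s2 := hlt j le_rfl
  have s3 := cnt_le_one lam T a j
  obtain ⟨i, hi, hia⟩ := (cnt_pos lam T a j).1 (by omega)
  have hno : ∀ i', (i', j) ∈ lam → T i' j ≠ a + 1 := by
    intro i' h1 h2
    have := (cnt_pos lam T (a + 1) j).2 ⟨i', h1, h2⟩
    omega
  have hright : (i, j + 1) ∈ lam → T i (j + 1) ≠ a := by
    intro h1 h2
    have p1 := (cnt_pos lam T a (j + 1)).2 ⟨i, h1, h2⟩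
    have p2 := ht_succ lam T a (j + 1)
    have p3 := hle (j + 1 + 1)
    obtain ⟨i', q1, q2⟩ := (cnt_pos lam T (a + 1) (j + 1)).1 (by omega)
    have hii : i < i' := by
      by_contra hc
      have := T.col_weak (not_lt.1 hc) h1
      omega
    have q3 : (i', j) ∈ lam := lam.up_left_mem le_rfl (Nat.le_succ j) q1
    have q4 := T.col_strict hii q3
    have q5 := T.row_weak (Nat.lt_succ_self j) q1
    exact hno i' q3 (by simp at q5; omega)
  let T' : SemistandardYoungTableau lam :=
    { entry := fun i' j' => if i' = i ∧ j' = j then a + 1 else T i' j'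
      row_weak' := by
        intro i' j1 j2 hj hm
        have hw := T.row_weak hj hm
        by_cases c1 : i' = i ∧ j1 = j
        · obtain ⟨rfl, rfl⟩ := c1
          have hm' : (i', j1 + 1) ∈ lam := lam.up_left_mem le_rfl hj hm
          have := hright hm'
          have w1 := T.row_weak (Nat.lt_succ_self j1) hm'
          have w2 := T.row_weak_of_le (Nat.succ_le_of_lt hj) hm
          have : ¬ (j2 = j1) := by omega
          simp only [this, and_false, and_true, if_true, if_false]
          simp only [Nat.succ_eq_add_one] at w1 w2
          omega
        · by_cases c2 : i' = i ∧ j2 = j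
          · obtain ⟨rfl, rfl⟩ := c2
            rw [if_neg c1, if_pos ⟨rfl, rfl⟩]
            omega
          · simp only [c1, c2, if_false]
            exact hw
      col_strict' := by
        intro i1 i2 j' hj hm
        have hw := T.col_strict hj hm
        by_cases c1 : i1 = i ∧ j' = j
        · obtain ⟨rfl, rfl⟩ := c1
          have := hno i2 hm
          have : ¬ (i2 = i1) := by omega
          simp only [this, false_and, and_true, if_true, if_false]
          omega
        · by_cases c2 : i2 = i ∧ j' = j
          · obtain ⟨rfl, rfl⟩ := c2
            rw [if_neg c1, if_pos ⟨rfl, rfl⟩]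
            omega
          · simp only [c1, c2, if_false]
            exact hw
      zeros' := by
        intro i' j' hm
        have : ¬ (i' = i ∧ j' = j) := by
          rintro ⟨rfl, rfl⟩
          exact hm hi
        simp only [this, if_false]
        exact T.zeros hm }
  have hT' : ∀ i' j', T' i' j' = if i' = i ∧ j' = j then a + 1 else T i' j' := fun _ _ => rfl
  refine ⟨T', i, j, hi, hia, by simp [hT'], ?_, hlt, hle⟩
  rintro ⟨i', j'⟩ hne
  simp only [hT']
  rw [if_neg]
  rintro ⟨rfl, rfl⟩
  exact hne rfl

/-- Tableaux with given content. -/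
abbrev Tab (lam : YoungDiagram) (mu : ℕ → ℕ) :=
  {T : SemistandardYoungTableau lam //
    ∀ v : ℕ, (lam.cells.filter (fun c => T c.1 c.2 = v)).card = mu v}

lemma kostka_eq (lam : YoungDiagram) (mu : ℕ → ℕ) : kostka lam mu = Nat.card (Tab lam mu) := by
  unfold kostka Tab
  congr!

lemma finite_tab (lam : YoungDiagram) (mu : ℕ → ℕ) (n : ℕ) (h : ∀ v, n ≤ v → mu v = 0) :
    Finite (Tab lam mu) := by
  have hb : ∀ (T : Tab lam mu) (c : lam.cells), T.1 c.1.1 c.1.2 < n := by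
    intro T c
    by_contra hc
    have h1 := T.2 (T.1 c.1.1 c.1.2)
    rw [h _ (not_lt.1 hc), Finset.card_eq_zero] at h1
    have : c.1 ∈ lam.cells.filter (fun d => T.1 d.1 d.2 = T.1 c.1.1 c.1.2) := by
      rw [Finset.mem_filter]
      exact ⟨c.2, rfl⟩
    rw [h1] at this
    simp at this
  refine Finite.of_injective
    (fun (T : Tab lam mu) (c : lam.cells) => (⟨T.1 c.1.1 c.1.2, hb T c⟩ : Fin n)) ?_
  intro T₁ T₂ he
  apply Subtype.ext
  ext i j
  by_cases hm : (i, j) ∈ lam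
  · have := congrFun he ⟨(i, j), by simpa using hm⟩
    simpa using this
  · rw [T₁.1.zeros hm, T₂.1.zeros hm]

/-- Transfer one unit from `a` to `a+1`. -/
def move (c : ℕ → ℕ) (a v : ℕ) : ℕ :=
  if v = a then c v - 1 else if v = a + 1 then c v + 1 else c v

lemma kostka_move (lam : YoungDiagram) (c : ℕ → ℕ) (n a : ℕ)
    (h : ∀ v, n ≤ v → move c a v = 0) (ha : c (a + 1) < c a) :
    kostka lam c ≤ kostka lam (move c a) := by
  rw [kostka_eq, kostka_eq]
  have := finite_tab lam (move c a) n h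
  have hex : ∀ T : Tab lam c, ∃ T' : Tab lam (move c a), ∃ i j, Rel lam a T.1 T'.1 i j := by
    intro T
    obtain ⟨T', i, j, hr⟩ := exists_rel lam a T.1 (by rw [T.2, T.2]; exact ha)
    refine ⟨⟨T', fun v => ?_⟩, i, j, hr⟩
    have h1 := count_update lam.cells (i, j) (by simpa using hr.mem) (fun c => T.1 c.1 c.2)
      (fun c => T' c.1 c.2) a hr.old hr.new hr.same v
    simp only [T.2] at h1
    unfold move
    split_ifs at h1 ⊢ <;> first | omega | (subst v; omega)
  choose F hF using hex
  refine Nat.card_le_card_of_injective F fun T₁ T₂ he => ?_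
  obtain ⟨i₁, j₁, h₁⟩ := hF T₁
  obtain ⟨i₂, j₂, h₂⟩ := hF T₂
  rw [he] at h₁
  exact Subtype.ext (h₁.inj h₂)

lemma sum_move (c : ℕ → ℕ) (a : ℕ) (ha : 0 < c a) (k : ℕ) :
    (∑ i ∈ Finset.range k, (move c a i : ℤ)) =
      ∑ i ∈ Finset.range k, (c i : ℤ) - if k = a + 1 then 1 else 0 := by
  induction k with
  | zero => simp
  | succ k ih =>
    rw [Finset.sum_range_succ, Finset.sum_range_succ, ih]
    unfold move
    split_ifs <;> first | omega | (subst k; omega)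

lemma main (lam : YoungDiagram) (n : ℕ) (nu : ℕ → ℕ) (hnu : ∀ i, nu (i + 1) ≤ nu i) (m : ℕ) :
    ∀ c : ℕ → ℕ, (D : ℕ → ℤ) →
    (∀ k, D k = ∑ i ∈ Finset.range k, (c i : ℤ) - ∑ i ∈ Finset.range k, (nu i : ℤ)) →
    (∀ v, n ≤ v → nu v = 0) → (∀ k, n ≤ k → D k = 0) → (∀ k, 0 ≤ D k) →
    ∑ k ∈ Finset.range n, D k = m → kostka lam c ≤ kostka lam nu := by
  induction m with
  | zero =>
    intro c D hD hs h0 hnn hsum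
    have hz : ∀ k, D k = 0 := by
      intro k
      by_cases hk : n ≤ k
      · exact h0 k hk
      · exact (Finset.sum_eq_zero_iff_of_nonneg (fun i _ => hnn i)).1 (by simpa using hsum) k
          (by simp; omega)
    have : c = nu := by
      funext v
      have h1 := hD (v + 1)
      have h2 := hD v
      rw [hz, Finset.sum_range_succ, Finset.sum_range_succ] at h1
      rw [hz] at h2
      omega
    rw [this]
  | succ m ih =>
    intro c D hD hs h0 hnn hsum
    have hD0 : D 0 = 0 := by simp [hD]
    obtain ⟨p, hp⟩ : ∃ p, D 0 < D p := by
      by_contra hc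
      push Not at hc
      have := Finset.sum_nonpos (s := Finset.range n) (f := D) (fun i _ => by
        have := hc i; omega)
      rw [hsum] at this
      push_cast at this
      omega
    obtain ⟨a, hlt, hle⟩ := exists_peak D n (fun k hk => by rw [h0 k hk, h0 n le_rfl]) p hp
    have hstep : ∀ k, D (k + 1) = D k + c k - nu k := by
      intro k
      rw [hD, hD, Finset.sum_range_succ, Finset.sum_range_succ]
      ring
    have t1 := hstep a
    have t2 := hstep (a + 1)
    have t3 := hlt a le_rfl
    have t4 := hle (a + 1 + 1)
    have t5 := hnu a
    have t6 := hnn a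
    have han : a + 1 < n := by
      by_contra hc
      have := h0 (a + 1) (not_lt.1 hc)
      omega
    have hca : c (a + 1) < c a := by omega
    have hcs : ∀ v, n ≤ v → move c a v = 0 := by
      intro v hv
      have g1 := hstep v
      rw [h0 v hv, h0 (v + 1) (by omega), hs v hv] at g1
      unfold move
      rw [if_neg (by omega), if_neg (by omega)]
      omega
    refine (kostka_move lam c n a hcs hca).trans
      (ih (move c a) (fun k => D k - if k = a + 1 then 1 else 0) ?_ hs ?_ ?_ ?_)
    · intro k
      rw [sum_move c a (by omega), hD]
      ring
    · intro k hk
      rw [h0 k hk, if_neg (by omega)]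
      rfl
    · intro k
      have := hnn k
      split_ifs with hk
      · subst hk; omega
      · omega
    · rw [Finset.sum_sub_distrib, hsum, Finset.sum_ite_eq', if_pos (by simpa using han)]
      push_cast
      ring

end KostkaAux

/-- White's monotonicity: for partitions `λ, μ, ν ⊢ n`, if `μ` majorizes `ν`
then `K_{λμ} ≤ K_{λν}`. Partitions `μ, ν` are encoded as weakly decreasing
functions `ℕ → ℕ` supported on `{0, …, n-1}` with total sum `n`. -/
theorem kostka_monotone (n : ℕ) (lam : YoungDiagram) (hlam : lam.card = n)
    (mu nu : ℕ → ℕ)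
    (hmu_dec : ∀ i, mu (i + 1) ≤ mu i) (hnu_dec : ∀ i, nu (i + 1) ≤ nu i)
    (hmu_supp : ∀ i, n ≤ i → mu i = 0) (hnu_supp : ∀ i, n ≤ i → nu i = 0)
    (hmu_sum : ∑ i ∈ Finset.range n, mu i = n)
    (hnu_sum : ∑ i ∈ Finset.range n, nu i = n)
    (hmaj : ∀ k, ∑ i ∈ Finset.range k, nu i ≤ ∑ i ∈ Finset.range k, mu i) :
    kostka lam mu ≤ kostka lam nu := by
  have hz : ∀ (c : ℕ → ℕ), (∀ i, n ≤ i → c i = 0) → ∑ i ∈ Finset.range n, c i = n →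
      ∀ k, n ≤ k → ∑ i ∈ Finset.range k, c i = n := by
    intro c h1 h2 k hk
    induction k, hk using Nat.le_induction with
    | base => exact h2
    | succ k hk ih => rw [Finset.sum_range_succ, ih, h1 k hk]; rfl
  have hnn : ∀ k, (0 : ℤ) ≤ ∑ i ∈ Finset.range k, (mu i : ℤ) - ∑ i ∈ Finset.range k, (nu i : ℤ) := by
    intro k
    have := hmaj k
    zify at this
    omega
  refine KostkaAux.main lam n nu hnu_dec (∑ k ∈ Finset.range n,
    (∑ i ∈ Finset.range k, (mu i : ℤ) - ∑ i ∈ Finset.range k, (nu i : ℤ))).toNat mu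
    (fun k => ∑ i ∈ Finset.range k, (mu i : ℤ) - ∑ i ∈ Finset.range k, (nu i : ℤ))
    (fun _ => rfl) hnu_supp ?_ hnn ?_
  · intro k hk
    have h1 := hz mu hmu_supp hmu_sum k hk
    have h2 := hz nu hnu_supp hnu_sum k hk
    zify at h1 h2
    simp only [h1, h2, sub_self]
  · exact (Int.toNat_of_nonneg (Finset.sum_nonneg fun k _ => hnn k)).symm
end
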